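/- Suppose G is connected, p > r + 2, C_p = 2(p + r − 2)/(p − r − 2), and ‖Δ‖ < λ₂/(√5 · C_p · √(rn)). Then every second-order critical point Y of the rank-p problem satisfies: (i) rank(Y) = r, so Y = Ẑ U for some Ẑ ∈ ℝ^{rn×r} whose r×r blocks are orthogonal matrices and some U ∈ ℝ^{r×p} with U Uᵀ = I_r; (ii) Y Yᵀ is the unique optimal solution of the SDP relaxation (in particular any two second-order critical points Y, Y′ satisfy Y Yᵀ = Y′Y′ᵀ, i.e., Y is the unique solution of the rank-p problem up to right-multiplication by an orthogonal matrix); (iii) Ẑ minimizes ⟨L̂, W Wᵀ⟩ over all W ∈ ℝ^{rn×r} with orthogonal r×r blocks, uniquely up to right-multiplication by an element of O(r). -/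

import Mathlib

open Matrix MeasureTheory ProbabilityTheory
open scoped Kronecker BigOperators

namespace SyncPaper

variable {α : Type*}

/-- The `i`-th `r × p` row-block of a block matrix `Y ∈ α^{rn × p}`. -/
def blk {n r p : ℕ} (Y : Matrix (Fin n × Fin r) (Fin p) α) (i : Fin n) :
    Matrix (Fin r) (Fin p) α :=
  Matrix.of fun a b => Y (i, a) b

/-- `Y` is feasible: every `r × p` row-block has orthonormal rows. -/
def Feasible {n r p : ℕ} (Y : Matrix (Fin n × Fin r) (Fin p) ℝ) : Prop :=
  ∀ i, blk Y i * (blk Y i)ᵀ = 1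

/-- Symmetric block-diagonal projection: keeps the symmetric part of each `r × r`
diagonal block and zeroes out all off-diagonal blocks. -/
noncomputable def SBD {n r : ℕ} (M : Matrix (Fin n × Fin r) (Fin n × Fin r) ℝ) :
    Matrix (Fin n × Fin r) (Fin n × Fin r) ℝ :=
  Matrix.of fun q q' => if q.1 = q'.1 then (M q q' + M q' q) / 2 else 0

/-- The matrix `S(Y) = L̂ − SBD(L̂ Y Yᵀ)`. -/
noncomputable def Smat {n r p : ℕ} (Lhat : Matrix (Fin n × Fin r) (Fin n × Fin r) ℝ)
    (Y : Matrix (Fin n × Fin r) (Fin p) ℝ) :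
    Matrix (Fin n × Fin r) (Fin n × Fin r) ℝ :=
  Lhat - SBD (Lhat * Y * Yᵀ)

/-- Second-order critical point of the rank-`p` problem `min ⟨L̂, Y Yᵀ⟩` over feasible `Y`. -/
def IsSecondOrderCritical {n r p : ℕ} (Lhat : Matrix (Fin n × Fin r) (Fin n × Fin r) ℝ)
    (Y : Matrix (Fin n × Fin r) (Fin p) ℝ) : Prop :=
  Feasible Y ∧ Smat Lhat Y * Y = 0 ∧
    ∀ Ydot : Matrix (Fin n × Fin r) (Fin p) ℝ,
      (∀ i, blk Ydot i * (blk Y i)ᵀ + blk Y i * (blk Ydot i)ᵀ = 0) →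
      0 ≤ (Smat Lhat Y * Ydot * Ydotᵀ).trace

/-- The stacked ground truth `Z ∈ ℝ^{rn × r}`. -/
def Zstack {n r : ℕ} (Zb : Fin n → Matrix (Fin r) (Fin r) ℝ) :
    Matrix (Fin n × Fin r) (Fin r) ℝ :=
  Matrix.of fun q b => Zb q.1 q.2 b

/-- The block-diagonal matrix `D` with diagonal blocks `Z_1, …, Z_n`. -/
def Dmat {n r : ℕ} (Zb : Fin n → Matrix (Fin r) (Fin r) ℝ) :
    Matrix (Fin n × Fin r) (Fin n × Fin r) ℝ :=
  Matrix.of fun q q' => if q.1 = q'.1 then Zb q.1 q.2 q'.2 else 0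

/-- `L_Z = D (L ⊗ I_r) Dᵀ`. -/
def LZmat {n r : ℕ} (L : Matrix (Fin n) (Fin n) ℝ) (Zb : Fin n → Matrix (Fin r) (Fin r) ℝ) :
    Matrix (Fin n × Fin r) (Fin n × Fin r) ℝ :=
  Dmat Zb * (L ⊗ₖ (1 : Matrix (Fin r) (Fin r) ℝ)) * (Dmat Zb)ᵀ

/-- The ℓ₂→ℓ₂ operator norm of a matrix. -/
noncomputable def opNorm {m m' : Type*} [Fintype m] [Fintype m'] [DecidableEq m']
    (M : Matrix m m' ℝ) : ℝ :=
  ‖(Matrix.toEuclideanLin (𝕜 := ℝ) (m := m) (n := m')).trans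
      LinearMap.toContinuousLinearMap M‖

/-- The second-smallest eigenvalue of a connected graph Laplacian, via the variational
(Courant–Fischer) characterization: the minimum of the quadratic form over unit vectors
orthogonal to the all-ones vector. -/
noncomputable def lam2 {n : ℕ} (L : Matrix (Fin n) (Fin n) ℝ) : ℝ :=
  sInf {t : ℝ | ∃ x : Fin n → ℝ, (∑ i, x i = 0) ∧ (∑ i, (x i) ^ 2 = 1) ∧ t = x ⬝ᵥ (L *ᵥ x)}

/-- Squared Frobenius norm of a real matrix. -/
def frobSq {m m' : Type*} [Fintype m] [Fintype m'] (M : Matrix m m' ℝ) : ℝ :=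
  ∑ i, ∑ j, (M i j) ^ 2

/-- The inner product `⟨A, B⟩ = tr(A Bᵀ)`. -/
def ip {m : Type*} [Fintype m] (A B : Matrix m m ℝ) : ℝ := (A * Bᵀ).trace

/-- Feasibility for the SDP relaxation. -/
def SDPFeasible {n r : ℕ} (X : Matrix (Fin n × Fin r) (Fin n × Fin r) ℝ) : Prop :=
  X.PosSemidef ∧ SBD X = 1

end SyncPaper

namespace SyncPaper

/-!
Conjugating by `D` reduces to the ground truth `Z_i = 1`. The second-order condition, averaged over
the tangent directions with blocks `Γ - Y_i Γᵀ Y_i` as `Γ` runs through the matrix units, becomes a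
single linear inequality on the cost. Its Laplacian part dominates
`(p - r - 2) * ⟨L ⊗ I_r, Y Yᵀ⟩`. Its noise part is at most
`3 * (p + r - 2) * ‖Δ‖ * √(r * n) * ‖W‖`, where `W` is the deviation of the blocks of `Y` from their
mean, and the spectral gap bounds `λ₂ * ‖W‖²` by the energy `⟨L ⊗ I_r, Y Yᵀ⟩`. So the energy is
small compared to `λ₂`, and this makes `S(Y)` positive definite on the vectors `x` with `Zᵀ x = 0`,
a space of codimension `r`. Since `S(Y)` annihilates `Y`, whose rank is at least `r`, it is positive
semidefinite with kernel the column space of `Y`: it is a dual certificate of the semidefinite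
relaxation, and complementary slackness gives uniqueness.
-/

section InnerProduct

variable {m ι : Type*} [Fintype m]

lemma ip_add_right (A B C : Matrix m m ℝ) : ip A (B + C) = ip A B + ip A C := by
  simp only [ip, transpose_add, Matrix.mul_add, trace_add]

lemma ip_sub_right (A B C : Matrix m m ℝ) : ip A (B - C) = ip A B - ip A C := by
  simp only [ip, transpose_sub, Matrix.mul_sub, trace_sub]

lemma ip_sub_left (A B C : Matrix m m ℝ) : ip (A - B) C = ip A C - ip B C := by
  simp only [ip, Matrix.sub_mul, trace_sub]

lemma ip_smul_right (A B : Matrix m m ℝ) (c : ℝ) : ip A (c • B) = c * ip A B := by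
  simp only [ip, transpose_smul, Matrix.mul_smul, trace_smul, smul_eq_mul]

lemma ip_sum_right (s : Finset ι) (A : Matrix m m ℝ) (B : ι → Matrix m m ℝ) :
    ip A (∑ k ∈ s, B k) = ∑ k ∈ s, ip A (B k) := by
  simp only [ip, transpose_sum, Matrix.mul_sum, trace_sum]

end InnerProduct

section Blocks

variable {n r p : ℕ}

lemma submatrix_mul_transpose_eq_blk (Y : Matrix (Fin n × Fin r) (Fin p) ℝ) (i j : Fin n) :
    (Y * Yᵀ).submatrix (Prod.mk i) (Prod.mk j) = blk Y i * (blk Y j)ᵀ :=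
  rfl

lemma SBD_transpose (M : Matrix (Fin n × Fin r) (Fin n × Fin r) ℝ) : (SBD M)ᵀ = SBD M := by
  ext q q'
  simp only [SBD, transpose_apply, of_apply, eq_comm (a := q'.1), add_comm (M q' q)]

lemma Smat_transpose {Lhat : Matrix (Fin n × Fin r) (Fin n × Fin r) ℝ} (hL : Lhatᵀ = Lhat)
    (Y : Matrix (Fin n × Fin r) (Fin p) ℝ) : (Smat Lhat Y)ᵀ = Smat Lhat Y := by
  rw [Smat, transpose_sub, SBD_transpose, hL]

lemma ip_SBD_left (A M : Matrix (Fin n × Fin r) (Fin n × Fin r) ℝ) :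
    ip (SBD A) M = ip A (SBD M) := by
  let f : Fin n × Fin r → Fin n × Fin r → ℝ := fun q q' => if q.1 = q'.1 then A q q' / 2 else 0
  calc ip (SBD A) M = ∑ q, ∑ q', (f q q' * M q q' + f q' q * M q q') :=
        Finset.sum_congr rfl fun q _ => Finset.sum_congr rfl fun q' _ => by
          by_cases h : q.1 = q'.1 <;> (simp [f, SBD, h, eq_comm (a := q'.1)]; try ring)
    _ = ∑ q, ∑ q', (f q q' * M q q' + f q q' * M q' q) := by
      simp_rw [Finset.sum_add_distrib]
      rw [Finset.sum_comm (f := fun q q' => f q' q * M q q')]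
    _ = ip A (SBD M) :=
        Finset.sum_congr rfl fun q _ => Finset.sum_congr rfl fun q' _ => by
          by_cases h : q.1 = q'.1 <;> (simp [f, SBD, h]; try ring)

lemma SBD_eq_smul_one {M : Matrix (Fin n × Fin r) (Fin n × Fin r) ℝ} {c : ℝ}
    (hM : ∀ i, M.submatrix (Prod.mk i) (Prod.mk i) = c • 1) : SBD M = c • 1 := by
  ext ⟨i, a⟩ ⟨j, b⟩
  obtain rfl | hij := eq_or_ne i j
  · have entry : ∀ a b, M (i, a) (i, b) = c * (1 : Matrix (Fin r) (Fin r) ℝ) a b := fun a b =>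
      congrFun₂ (hM i) a b
    simp [SBD, entry, one_apply, eq_comm (a := b)]
  · simp [SBD, hij]

lemma ip_eq_add_ip_Smat (Lhat : Matrix (Fin n × Fin r) (Fin n × Fin r) ℝ)
    (Y : Matrix (Fin n × Fin r) (Fin p) ℝ) {X : Matrix (Fin n × Fin r) (Fin n × Fin r) ℝ}
    {c : ℝ} (hX : SBD X = c • 1) : ip Lhat X = c * ip Lhat (Y * Yᵀ) + ip (Smat Lhat Y) X := by
  have h : ip (SBD (Lhat * Y * Yᵀ)) X = c * ip Lhat (Y * Yᵀ) := by
    rw [ip_SBD_left, hX, ip_smul_right, ip, ip, transpose_one, Matrix.mul_one, transpose_mul,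
      transpose_transpose, Matrix.mul_assoc]
  rw [Smat, ip_sub_left, h, add_sub_cancel]

end Blocks

section Norms

variable {m m' κ : Type*} [Fintype m] [Fintype m'] [Fintype κ]

lemma frobSq_nonneg (M : Matrix m m' ℝ) : 0 ≤ frobSq M :=
  Finset.sum_nonneg fun _ _ => Finset.sum_nonneg fun _ _ => sq_nonneg _

lemma frobSq_eq_trace (M : Matrix m m' ℝ) : frobSq M = (M * Mᵀ).trace := by
  simp only [frobSq, trace, diag_apply, mul_apply, transpose_apply, sq]

lemma frobSq_eq_sum_col (M : Matrix m m' ℝ) : frobSq M = ∑ c, M.col c ⬝ᵥ M.col c := by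
  simp only [frobSq, dotProduct, col_apply, ← sq]
  exact Finset.sum_comm

lemma ip_mul_transpose (A : Matrix m m ℝ) (P Q : Matrix m κ ℝ) :
    ip A (P * Qᵀ) = ∑ c, P.col c ⬝ᵥ (A *ᵥ Q.col c) := by
  rw [ip, transpose_mul, transpose_transpose, ← Matrix.mul_assoc, trace_mul_comm]
  rfl

lemma opNorm_nonneg [DecidableEq m'] (M : Matrix m m' ℝ) : 0 ≤ opNorm M :=
  norm_nonneg _

open scoped Matrix.Norms.L2Operator in
lemma opNorm_eq_norm [DecidableEq m'] (M : Matrix m m' ℝ) : opNorm M = ‖M‖ :=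
  (l2_opNorm_def M).symm

lemma norm_toLp_eq_sqrt (v : m → ℝ) : ‖WithLp.toLp 2 v‖ = √(v ⬝ᵥ v) := by
  simp only [EuclideanSpace.norm_eq, Real.norm_eq_abs, sq_abs, dotProduct, ← sq]

lemma abs_dotProduct_mulVec_le [DecidableEq m'] (M : Matrix m m' ℝ) (u : m → ℝ) (v : m' → ℝ) :
    |u ⬝ᵥ (M *ᵥ v)| ≤ opNorm M * (√(u ⬝ᵥ u) * √(v ⬝ᵥ v)) := by
  have hinner : inner ℝ (WithLp.toLp 2 (M *ᵥ v)) (WithLp.toLp 2 u) = u ⬝ᵥ (M *ᵥ v) :=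
    EuclideanSpace.inner_toLp_toLp _ _
  calc |u ⬝ᵥ (M *ᵥ v)| ≤ ‖WithLp.toLp 2 (M *ᵥ v)‖ * ‖WithLp.toLp 2 u‖ :=
        hinner ▸ abs_real_inner_le_norm _ _
    _ ≤ opNorm M * ‖WithLp.toLp 2 v‖ * ‖WithLp.toLp 2 u‖ := by
      gcongr
      rw [opNorm_eq_norm]
      exact l2_opNorm_mulVec M (WithLp.toLp 2 v)
    _ = _ := by rw [norm_toLp_eq_sqrt, norm_toLp_eq_sqrt]; ring

lemma abs_ip_mul_transpose_le [DecidableEq m] (A : Matrix m m ℝ) (P Q : Matrix m κ ℝ) :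
    |ip A (P * Qᵀ)| ≤ opNorm A * (√(frobSq P) * √(frobSq Q)) := by
  calc |ip A (P * Qᵀ)| ≤ ∑ c, |P.col c ⬝ᵥ (A *ᵥ Q.col c)| := by
        rw [ip_mul_transpose]
        exact Finset.abs_sum_le_sum_abs _ _
    _ ≤ ∑ c, opNorm A * (√(P.col c ⬝ᵥ P.col c) * √(Q.col c ⬝ᵥ Q.col c)) :=
      Finset.sum_le_sum fun c _ => abs_dotProduct_mulVec_le A _ _
    _ ≤ opNorm A * (√(frobSq P) * √(frobSq Q)) := by
      rw [← Finset.mul_sum, frobSq_eq_sum_col, frobSq_eq_sum_col]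
      gcongr
      · exact opNorm_nonneg A
      · exact Real.sum_sqrt_mul_sqrt_le _ (fun c => dotProduct_self_star_nonneg _)
          fun c => dotProduct_self_star_nonneg _

end Norms

section SpectralGap

variable {n r : ℕ} {κ : Type*} [Fintype κ]

lemma lam2_mul_dotProduct_self_le (L : Matrix (Fin n) (Fin n) ℝ) {x : Fin n → ℝ}
    (hx : ∑ i, x i = 0) : lam2 L * (x ⬝ᵥ x) ≤ x ⬝ᵥ (L *ᵥ x) := by
  obtain rfl | hne := eq_or_ne x 0
  · simp only [dotProduct_zero, zero_dotProduct, mul_zero, le_refl]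
  have hpos : 0 < x ⬝ᵥ x := by
    simpa only [star_trivial] using dotProduct_self_star_pos_iff.2 hne
  set c := (√(x ⬝ᵥ x))⁻¹ with hc
  have hcc : c ^ 2 * (x ⬝ᵥ x) = 1 := by
    rw [hc, inv_pow, Real.sq_sqrt hpos.le, inv_mul_cancel₀ hpos.ne']
  have hbdd : BddBelow {t : ℝ | ∃ x : Fin n → ℝ, (∑ i, x i = 0) ∧ (∑ i, (x i) ^ 2 = 1) ∧
      t = x ⬝ᵥ (L *ᵥ x)} := by
    refine ⟨-opNorm L, ?_⟩
    rintro _ ⟨y, -, hy, rfl⟩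
    have hyy : y ⬝ᵥ y = 1 := by simpa only [dotProduct, ← sq] using hy
    have := abs_dotProduct_mulVec_le L y y
    rw [hyy, Real.sqrt_one, mul_one, mul_one] at this
    exact (abs_le.1 this).1
  have hle : lam2 L ≤ (c • x) ⬝ᵥ (L *ᵥ (c • x)) := by
    refine csInf_le hbdd ⟨c • x, ?_, ?_, rfl⟩
    · simp only [Pi.smul_apply, smul_eq_mul, ← Finset.mul_sum, hx, mul_zero]
    · simpa only [Pi.smul_apply, smul_eq_mul, mul_pow, ← Finset.mul_sum, dotProduct, ← sq] using hcc
  calc lam2 L * (x ⬝ᵥ x) ≤ (c • x) ⬝ᵥ (L *ᵥ (c • x)) * (x ⬝ᵥ x) := by gcongr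
    _ = c ^ 2 * (x ⬝ᵥ x) * (x ⬝ᵥ (L *ᵥ x)) := by
      simp only [mulVec_smul, smul_dotProduct, dotProduct_smul, smul_eq_mul]; ring
    _ = x ⬝ᵥ (L *ᵥ x) := by rw [hcc, one_mul]

lemma ip_kronecker_one (L : Matrix (Fin n) (Fin n) ℝ)
    (M : Matrix (Fin n × Fin r) (Fin n × Fin r) ℝ) :
    ip (L ⊗ₖ (1 : Matrix (Fin r) (Fin r) ℝ)) M =
      ∑ i, ∑ j, L i j * (M.submatrix (Prod.mk i) (Prod.mk j)).trace := by
  simp only [ip, trace, diag_apply, mul_apply, transpose_apply, kronecker_apply, one_apply,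
    Fintype.sum_prod_type, mul_ite, mul_one, mul_zero, ite_mul, zero_mul, Finset.sum_ite_eq,
    Finset.mem_univ, if_true, submatrix_apply, Finset.mul_sum]
  exact Finset.sum_congr rfl fun i _ => Finset.sum_comm

lemma lam2_mul_frobSq_le (L : Matrix (Fin n) (Fin n) ℝ) {M : Matrix (Fin n × Fin r) κ ℝ}
    (hM : ∀ a c, ∑ i, M (i, a) c = 0) :
    lam2 L * frobSq M ≤ ip (L ⊗ₖ (1 : Matrix (Fin r) (Fin r) ℝ)) (M * Mᵀ) := by
  let x : Fin r → κ → Fin n → ℝ := fun a c i => M (i, a) c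
  have hfrob : frobSq M = ∑ a, ∑ c, x a c ⬝ᵥ x a c := by
    simp only [frobSq, Fintype.sum_prod_type, dotProduct, x, ← sq]
    rw [Finset.sum_comm]
    exact Finset.sum_congr rfl fun a _ => Finset.sum_comm
  have hip : ip (L ⊗ₖ (1 : Matrix (Fin r) (Fin r) ℝ)) (M * Mᵀ) =
      ∑ a, ∑ c, x a c ⬝ᵥ (L *ᵥ x a c) := by
    simp only [ip_mul_transpose, dotProduct, mulVec, kronecker_apply, one_apply,
      Fintype.sum_prod_type, mul_ite, mul_one, mul_zero, ite_mul, zero_mul, Finset.sum_ite_eq,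
      Finset.mem_univ, if_true, col_apply, x]
    rw [Finset.sum_congr rfl fun c _ => Finset.sum_comm, Finset.sum_comm]
  rw [hfrob, hip, Finset.mul_sum]
  refine Finset.sum_le_sum fun a _ => ?_
  rw [Finset.mul_sum]
  exact Finset.sum_le_sum fun c _ => lam2_mul_dotProduct_self_le L (hM a c)

end SpectralGap

section BlockGeometry

variable {n r p : ℕ}

/-- Half the squared Frobenius distances between the blocks of `Y`. For feasible `Y` its entries
are `r - ⟨Y_i, Y_j⟩`. -/
noncomputable def halfSqDist (Y : Matrix (Fin n × Fin r) (Fin p) ℝ) : Matrix (Fin n) (Fin n) ℝ :=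
  of fun i j => frobSq (blk Y i - blk Y j) / 2

/-- The matrix obtained from `M` by multiplying the `(i, j)` block by the scalar `T i j`. -/
def blockScale (T : Matrix (Fin n) (Fin n) ℝ) (M : Matrix (Fin n × Fin r) (Fin n × Fin r) ℝ) :
    Matrix (Fin n × Fin r) (Fin n × Fin r) ℝ :=
  T.submatrix Prod.fst Prod.fst ⊙ M

/-- `n` stacked copies of the block `A`. -/
def stackConst (n : ℕ) (A : Matrix (Fin r) (Fin p) ℝ) : Matrix (Fin n × Fin r) (Fin p) ℝ :=
  A.submatrix Prod.snd id

lemma frobSq_sub {m m' : Type*} [Fintype m] [Fintype m'] (A B : Matrix m m' ℝ) :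
    frobSq (A - B) = frobSq A + frobSq B - 2 * (A * Bᵀ).trace := by
  have hBA : (B * Aᵀ).trace = (A * Bᵀ).trace := by
    rw [← trace_transpose, transpose_mul, transpose_transpose]
  simp only [frobSq_eq_trace, transpose_sub, Matrix.sub_mul, Matrix.mul_sub, trace_sub, hBA]
  ring

variable {Y : Matrix (Fin n × Fin r) (Fin p) ℝ}

lemma Feasible.frobSq_blk (hY : Feasible Y) (i : Fin n) : frobSq (blk Y i) = r := by
  rw [frobSq_eq_trace, hY i, trace_one, Fintype.card_fin]

lemma Feasible.trace_blk_mul_transpose (hY : Feasible Y) (i j : Fin n) :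
    (blk Y i * (blk Y j)ᵀ).trace = r - halfSqDist Y i j := by
  rw [halfSqDist, of_apply, frobSq_sub, hY.frobSq_blk, hY.frobSq_blk]
  ring

lemma halfSqDist_self (i : Fin n) : halfSqDist Y i i = 0 := by
  rw [halfSqDist, of_apply, sub_self, frobSq_eq_trace, Matrix.zero_mul, trace_zero, zero_div]

lemma halfSqDist_nonneg (i j : Fin n) : 0 ≤ halfSqDist Y i j :=
  div_nonneg (frobSq_nonneg _) zero_le_two

end BlockGeometry

section TestDirections

variable {n r p : ℕ}

section MatrixUnits

variable {l m : Type*} [Fintype l] [Fintype m] [DecidableEq l] [DecidableEq m]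

lemma sum_single_mul_transpose : ∑ k : l, ∑ c : m,
    (single k c (1 : ℝ)) * (single k c (1 : ℝ))ᵀ = (Fintype.card m : ℝ) • 1 := by
  ext a b
  simp [Matrix.sum_apply, transpose_single, single_apply, one_apply, ite_and]

lemma sum_single_mul_mul_single (M : Matrix m l ℝ) :
    ∑ k : l, ∑ c : m, single k c (1 : ℝ) * M * single k c (1 : ℝ) = Mᵀ := by
  ext a b
  simp [Matrix.sum_apply, single_mul_mul_single, single_apply, ite_and]

lemma sum_transpose_single_mul_mul_single (M : Matrix l l ℝ) :
    ∑ k : l, ∑ c : m, (single k c (1 : ℝ))ᵀ * M * single k c (1 : ℝ) = M.trace • 1 := by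
  ext a b
  simp [Matrix.sum_apply, transpose_single, single_mul_mul_single, single_apply, ite_and,
    one_apply, trace]

end MatrixUnits

/-- The tangent direction at `Y` whose `i`-th block is `Γ - Y_i Γᵀ Y_i`. -/
def testDir (Y : Matrix (Fin n × Fin r) (Fin p) ℝ) (Γ : Matrix (Fin r) (Fin p) ℝ) :
    Matrix (Fin n × Fin r) (Fin p) ℝ :=
  of fun q => (Γ - blk Y q.1 * Γᵀ * blk Y q.1) q.2

lemma blk_testDir (Y : Matrix (Fin n × Fin r) (Fin p) ℝ) (Γ : Matrix (Fin r) (Fin p) ℝ)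
    (i : Fin n) : blk (testDir Y Γ) i = Γ - blk Y i * Γᵀ * blk Y i :=
  rfl

lemma testDir_tangent {Y : Matrix (Fin n × Fin r) (Fin p) ℝ} (hY : Feasible Y)
    (Γ : Matrix (Fin r) (Fin p) ℝ) (i : Fin n) :
    blk (testDir Y Γ) i * (blk Y i)ᵀ + blk Y i * (blk (testDir Y Γ) i)ᵀ = 0 := by
  have h₁ : blk Y i * Γᵀ * blk Y i * (blk Y i)ᵀ = blk Y i * Γᵀ := by
    rw [Matrix.mul_assoc, hY i, Matrix.mul_one]
  have h₂ : blk Y i * ((blk Y i)ᵀ * (Γ * (blk Y i)ᵀ)) = Γ * (blk Y i)ᵀ := by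
    rw [← Matrix.mul_assoc, hY i, Matrix.one_mul]
  rw [blk_testDir, transpose_sub, transpose_mul, transpose_mul, transpose_transpose,
    Matrix.sub_mul, Matrix.mul_sub, h₁, h₂]
  abel

/-- The difference between `(p + r - 2) • Y Yᵀ` and the sum of `Ẏ Ẏᵀ` over the directions
`Ẏ = testDir Y E`, with `E` running through the matrix units. -/
noncomputable def averagedVariation (Y : Matrix (Fin n × Fin r) (Fin p) ℝ) :
    Matrix (Fin n × Fin r) (Fin n × Fin r) ℝ :=
  ((p : ℝ) - 2) • (Y * Yᵀ - stackConst n 1 * (stackConst n (1 : Matrix (Fin r) (Fin r) ℝ))ᵀ) +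
    blockScale (halfSqDist Y) (Y * Yᵀ)

lemma averagedVariation_submatrix (Y : Matrix (Fin n × Fin r) (Fin p) ℝ) (i j : Fin n) :
    (averagedVariation Y).submatrix (Prod.mk i) (Prod.mk j) =
      ((p : ℝ) - 2) • (blk Y i * (blk Y j)ᵀ - 1) + halfSqDist Y i j • (blk Y i * (blk Y j)ᵀ) := by
  have hone : (1 : Matrix (Fin r) (Fin r) ℝ) = 1 * 1ᵀ := by rw [transpose_one, Matrix.one_mul]
  rw [hone]
  rfl

lemma sum_blk_testDir_mul_transpose {Y : Matrix (Fin n × Fin r) (Fin p) ℝ} (hY : Feasible Y)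
    (i j : Fin n) : ∑ k : Fin r, ∑ l : Fin p,
      blk (testDir Y (single k l 1)) i * (blk (testDir Y (single k l 1)) j)ᵀ =
      ((p : ℝ) - 2) • 1 + (blk Y i * (blk Y j)ᵀ).trace • (blk Y i * (blk Y j)ᵀ) := by
  set A := blk Y i with hA
  set B := blk Y j with hB
  have expand : ∀ E : Matrix (Fin r) (Fin p) ℝ,
      blk (testDir Y E) i * (blk (testDir Y E) j)ᵀ =
        E * Eᵀ - E * Bᵀ * E * Bᵀ - A * (E * Aᵀ * E)ᵀ + A * (Eᵀ * (A * Bᵀ) * E) * Bᵀ := fun E => by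
    simp only [blk_testDir, transpose_sub, transpose_mul, transpose_transpose, Matrix.sub_mul,
      Matrix.mul_sub, Matrix.mul_assoc, ← hA, ← hB]
    abel
  simp only [expand, Finset.sum_add_distrib, Finset.sum_sub_distrib, ← Matrix.mul_sum,
    ← Matrix.sum_mul, ← transpose_sum, sum_single_mul_transpose, sum_single_mul_mul_single,
    sum_transpose_single_mul_mul_single, transpose_transpose, Fintype.card_fin]
  rw [hY i, hY j, Matrix.mul_smul, Matrix.mul_one, Matrix.smul_mul]
  module

lemma sum_testDir_mul_transpose {Y : Matrix (Fin n × Fin r) (Fin p) ℝ} (hY : Feasible Y) :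
    ∑ k : Fin r, ∑ l : Fin p, testDir Y (single k l 1) * (testDir Y (single k l 1))ᵀ =
      ((p : ℝ) + r - 2) • (Y * Yᵀ) - averagedVariation Y := by
  ext ⟨i, a⟩ ⟨j, b⟩
  have hblock := sum_blk_testDir_mul_transpose hY i j
  rw [hY.trace_blk_mul_transpose] at hblock
  replace hblock : ∑ k : Fin r, ∑ l : Fin p,
      blk (testDir Y (single k l 1)) i * (blk (testDir Y (single k l 1)) j)ᵀ =
      ((p : ℝ) + r - 2) • (blk Y i * (blk Y j)ᵀ) -
        (averagedVariation Y).submatrix (Prod.mk i) (Prod.mk j) := by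
    rw [hblock, averagedVariation_submatrix]
    module
  calc _ = (∑ k : Fin r, ∑ l : Fin p,
        blk (testDir Y (single k l 1)) i * (blk (testDir Y (single k l 1)) j)ᵀ) a b := by
        simp only [Matrix.sum_apply]; rfl
    _ = _ := congrFun₂ hblock a b

lemma IsSecondOrderCritical.ip_averagedVariation_nonpos
    {Lhat : Matrix (Fin n × Fin r) (Fin n × Fin r) ℝ} {Y : Matrix (Fin n × Fin r) (Fin p) ℝ}
    (hY : IsSecondOrderCritical Lhat Y) : ip Lhat (averagedVariation Y) ≤ 0 := by
  obtain ⟨hfeas, -, hcurv⟩ := hY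
  set P := ∑ k : Fin r, ∑ l : Fin p, testDir Y (single k l 1) * (testDir Y (single k l 1))ᵀ with hP
  have hSP : 0 ≤ ip (Smat Lhat Y) P := by
    simp only [hP, ip_sum_right]
    refine Finset.sum_nonneg fun k _ => Finset.sum_nonneg fun l _ => ?_
    rw [ip, transpose_mul, transpose_transpose, ← Matrix.mul_assoc]
    exact hcurv _ (testDir_tangent hfeas _)
  have hip : ip Lhat P = ((p : ℝ) + r - 2) * ip Lhat (Y * Yᵀ) - ip Lhat (averagedVariation Y) := by
    rw [hP, sum_testDir_mul_transpose hfeas, ip_sub_right, ip_smul_right]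
  have hSBD : SBD P = ((p : ℝ) + r - 2) • 1 := SBD_eq_smul_one fun i => by
    rw [hP, sum_testDir_mul_transpose hfeas, submatrix_sub, Pi.sub_apply, Pi.sub_apply,
      averagedVariation_submatrix, submatrix_smul, Pi.smul_apply, Pi.smul_apply,
      submatrix_mul_transpose_eq_blk, hfeas i, halfSqDist_self]
    module
  linarith [ip_eq_add_ip_Smat Lhat Y hSBD]

end TestDirections

/-- Laplacians of weighted graphs: symmetric matrices with nonpositive off-diagonal entries and
vanishing row sums. -/
structure IsLaplacian {n : ℕ} (L : Matrix (Fin n) (Fin n) ℝ) : Prop where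
  isSymm : L.IsSymm
  offDiag_nonpos : ∀ i j, i ≠ j → L i j ≤ 0
  mulVec_one : L *ᵥ 1 = 0

lemma isLaplacian_lapMatrix {n : ℕ} (G : SimpleGraph (Fin n)) [DecidableRel G.Adj] :
    IsLaplacian (G.lapMatrix ℝ) where
  isSymm := G.isSymm_lapMatrix ℝ
  offDiag_nonpos i j hij := by
    rw [SimpleGraph.lapMatrix, Matrix.sub_apply, SimpleGraph.degMatrix, diagonal_apply_ne _ hij,
      SimpleGraph.adjMatrix_apply, zero_sub, neg_nonpos]
    positivity
  mulVec_one := G.lapMatrix_mulVec_const_eq_zero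

section Energy

variable {n r p : ℕ} {L : Matrix (Fin n) (Fin n) ℝ} {Y : Matrix (Fin n × Fin r) (Fin p) ℝ}

lemma IsLaplacian.sum_row (hL : IsLaplacian L) (i : Fin n) : ∑ j, L i j = 0 := by
  simpa only [mulVec, dotProduct_one, Pi.zero_apply] using congrFun hL.mulVec_one i

lemma IsLaplacian.sum_mul_nonpos (hL : IsLaplacian L) {T : Fin n → Fin n → ℝ}
    (hT : ∀ i j, 0 ≤ T i j) (hdiag : ∀ i, T i i = 0) : ∑ i, ∑ j, L i j * T i j ≤ 0 :=
  Finset.sum_nonpos fun i _ => Finset.sum_nonpos fun j _ => by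
    obtain rfl | hij := eq_or_ne i j
    · rw [hdiag, mul_zero]
    · exact mul_nonpos_of_nonpos_of_nonneg (hL.offDiag_nonpos i j hij) (hT i j)

lemma IsLaplacian.sum_col (hL : IsLaplacian L) (j : Fin n) : ∑ i, L i j = 0 := by
  simpa only [hL.isSymm.apply] using hL.sum_row j

lemma IsLaplacian.ip_mul_transpose_eq (hL : IsLaplacian L)
    (Y : Matrix (Fin n × Fin r) (Fin p) ℝ) :
    ip (L ⊗ₖ (1 : Matrix (Fin r) (Fin r) ℝ)) (Y * Yᵀ) = -∑ i, ∑ j, L i j * halfSqDist Y i j := by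
  have htrace : ∀ i j, (blk Y i * (blk Y j)ᵀ).trace =
      frobSq (blk Y i) / 2 + frobSq (blk Y j) / 2 - halfSqDist Y i j := fun i j => by
    rw [halfSqDist, of_apply, frobSq_sub]
    ring
  have hcol : ∑ i, ∑ j, L i j * (frobSq (blk Y j) / 2) = 0 := by
    rw [Finset.sum_comm]
    simp only [← Finset.sum_mul, hL.sum_col, zero_mul, Finset.sum_const_zero]
  simp only [ip_kronecker_one, submatrix_mul_transpose_eq_blk, htrace, mul_sub, mul_add,
    Finset.sum_sub_distrib, Finset.sum_add_distrib, hcol]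
  simp only [← Finset.sum_mul, hL.sum_row, zero_mul, Finset.sum_const_zero, add_zero, zero_sub]

lemma IsLaplacian.mul_ip_le_ip_averagedVariation (hL : IsLaplacian L) (hY : Feasible Y) :
    ((p : ℝ) - r - 2) * ip (L ⊗ₖ (1 : Matrix (Fin r) (Fin r) ℝ)) (Y * Yᵀ) ≤
      ip (L ⊗ₖ (1 : Matrix (Fin r) (Fin r) ℝ)) (averagedVariation Y) := by
  have hblock : ∀ i j, ((averagedVariation Y).submatrix (Prod.mk i) (Prod.mk j)).trace =
      -((p : ℝ) - r - 2) * halfSqDist Y i j - halfSqDist Y i j ^ 2 := fun i j => by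
    rw [averagedVariation_submatrix, trace_add, trace_smul, trace_smul, trace_sub, trace_one,
      hY.trace_blk_mul_transpose, Fintype.card_fin, smul_eq_mul, smul_eq_mul]
    ring
  have hsq : ∑ i, ∑ j, L i j * halfSqDist Y i j ^ 2 ≤ 0 :=
    hL.sum_mul_nonpos (T := fun i j => halfSqDist Y i j ^ 2) (fun i j => sq_nonneg _)
      fun i => by rw [halfSqDist_self, zero_pow two_ne_zero]
  have hsum : ip (L ⊗ₖ (1 : Matrix (Fin r) (Fin r) ℝ)) (averagedVariation Y) =
      ((p : ℝ) - r - 2) * ip (L ⊗ₖ (1 : Matrix (Fin r) (Fin r) ℝ)) (Y * Yᵀ) -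
        ∑ i, ∑ j, L i j * halfSqDist Y i j ^ 2 := by
    rw [ip_kronecker_one, hL.ip_mul_transpose_eq, mul_neg, ← neg_mul, Finset.mul_sum,
      ← Finset.sum_sub_distrib]
    simp only [hblock, Finset.mul_sum, ← Finset.sum_sub_distrib]
    exact Finset.sum_congr rfl fun i _ => Finset.sum_congr rfl fun j _ => by ring
  rw [hsum]
  exact (le_sub_self_iff _).2 hsq

end Energy

section Deviation

variable {n r p : ℕ}

/-- The average of the `r × p` blocks of `Y`. -/
noncomputable def meanBlock (Y : Matrix (Fin n × Fin r) (Fin p) ℝ) : Matrix (Fin r) (Fin p) ℝ :=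
  (n : ℝ)⁻¹ • ∑ i, blk Y i

/-- The deviation of the blocks of `Y` from their average. -/
noncomputable def deviation (Y : Matrix (Fin n × Fin r) (Fin p) ℝ) :
    Matrix (Fin n × Fin r) (Fin p) ℝ :=
  Y - stackConst n (meanBlock Y)

lemma frobSq_eq_sum_blk (M : Matrix (Fin n × Fin r) (Fin p) ℝ) :
    frobSq M = ∑ i, frobSq (blk M i) :=
  Fintype.sum_prod_type _

lemma frobSq_stackConst (A : Matrix (Fin r) (Fin p) ℝ) :
    frobSq (stackConst n A) = n * frobSq A := by
  rw [frobSq_eq_sum_blk]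
  change ∑ _ : Fin n, frobSq A = n * frobSq A
  rw [Finset.sum_const, Finset.card_univ, Fintype.card_fin, nsmul_eq_mul]

lemma Feasible.frobSq_eq {Y : Matrix (Fin n × Fin r) (Fin p) ℝ} (hY : Feasible Y) :
    frobSq Y = r * n := by
  rw [frobSq_eq_sum_blk]
  simp only [hY.frobSq_blk, Finset.sum_const, Finset.card_univ, Fintype.card_fin, nsmul_eq_mul]
  exact mul_comm _ _

lemma blk_deviation (Y : Matrix (Fin n × Fin r) (Fin p) ℝ) (i : Fin n) :
    blk (deviation Y) i = blk Y i - meanBlock Y :=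
  rfl

variable [NeZero n]

lemma sum_blk (Y : Matrix (Fin n × Fin r) (Fin p) ℝ) : ∑ i, blk Y i = (n : ℝ) • meanBlock Y := by
  rw [meanBlock, smul_inv_smul₀ (NeZero.ne _)]

lemma sum_blk_deviation (Y : Matrix (Fin n × Fin r) (Fin p) ℝ) :
    ∑ i, blk (deviation Y) i = 0 := by
  simp only [blk_deviation, Finset.sum_sub_distrib, sum_blk, Finset.sum_const, Finset.card_univ,
    Fintype.card_fin, ← Nat.cast_smul_eq_nsmul ℝ, sub_self]

variable {Y : Matrix (Fin n × Fin r) (Fin p) ℝ}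

lemma Feasible.sum_blk_deviation_mul_transpose (hY : Feasible Y) :
    ∑ i, blk (deviation Y) i * (blk (deviation Y) i)ᵀ =
      (n : ℝ) • (1 - meanBlock Y * (meanBlock Y)ᵀ) := by
  simp only [blk_deviation, transpose_sub, Matrix.sub_mul, Matrix.mul_sub, hY _,
    Finset.sum_sub_distrib, ← Matrix.mul_sum, ← Matrix.sum_mul, ← transpose_sum, sum_blk,
    Finset.sum_const, Finset.card_univ, Fintype.card_fin, ← Nat.cast_smul_eq_nsmul ℝ,
    transpose_smul, Matrix.mul_smul, Matrix.smul_mul]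
  module

lemma Feasible.frobSq_deviation (hY : Feasible Y) :
    frobSq (deviation Y) = r * n - n * frobSq (meanBlock Y) := by
  simp only [frobSq_eq_sum_blk (deviation Y), frobSq_eq_trace, ← trace_sum,
    hY.sum_blk_deviation_mul_transpose, trace_smul, trace_sub, trace_one, Fintype.card_fin,
    smul_eq_mul]
  ring

lemma Feasible.frobSq_deviation_le (hY : Feasible Y) : frobSq (deviation Y) ≤ r * n := by
  rw [hY.frobSq_deviation]
  exact sub_le_self _ (mul_nonneg n.cast_nonneg (frobSq_nonneg _))

lemma Feasible.frobSq_stackConst_meanBlock_le (hY : Feasible Y) :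
    frobSq (stackConst n (meanBlock Y)) ≤ r * n := by
  rw [frobSq_stackConst]
  linarith [hY.frobSq_deviation, frobSq_nonneg (deviation Y)]

lemma Feasible.frobSq_blk_deviation_le (hY : Feasible Y) (i : Fin n) :
    frobSq (blk (deviation Y) i) ≤ 4 * r := by
  have hmean : frobSq (meanBlock Y) ≤ r := by
    have hn : (0 : ℝ) < n := Nat.cast_pos.2 (NeZero.pos n)
    have := hY.frobSq_stackConst_meanBlock_le
    rw [frobSq_stackConst, mul_comm] at this
    exact le_of_mul_le_mul_right this hn
  have hparallelogram : frobSq (blk Y i - meanBlock Y) + frobSq (blk Y i + meanBlock Y) =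
      2 * frobSq (blk Y i) + 2 * frobSq (meanBlock Y) := by
    simp only [frobSq, Matrix.sub_apply, Matrix.add_apply, Finset.mul_sum,
      ← Finset.sum_add_distrib]
    exact Finset.sum_congr rfl fun a _ => Finset.sum_congr rfl fun b _ => by ring
  rw [blk_deviation]
  linarith [frobSq_nonneg (blk Y i + meanBlock Y), hY.frobSq_blk i]

end Deviation

section NoiseBound

variable {n r p : ℕ} {Y : Matrix (Fin n × Fin r) (Fin p) ℝ}
  (Δ : Matrix (Fin n × Fin r) (Fin n × Fin r) ℝ)

lemma Feasible.sqrt_frobSq_deviation_mul_self_le [NeZero n] (hY : Feasible Y) :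
    √(frobSq (deviation Y)) * √(frobSq (deviation Y)) ≤ √(r * n) * √(frobSq (deviation Y)) := by
  gcongr
  exact hY.frobSq_deviation_le

lemma Feasible.mul_transpose_sub_eq [NeZero n] (hY : Feasible Y) :
    Y * Yᵀ - stackConst n 1 * (stackConst n (1 : Matrix (Fin r) (Fin r) ℝ))ᵀ =
      deviation Y * Yᵀ + stackConst n (meanBlock Y) * (deviation Y)ᵀ -
        (n : ℝ)⁻¹ • ∑ i, stackConst n (blk (deviation Y) i) *
          (stackConst n (blk (deviation Y) i))ᵀ := by
  have hsum : ∑ i, stackConst n (blk (deviation Y) i) * (stackConst n (blk (deviation Y) i))ᵀ =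
      (n : ℝ) • (stackConst n 1 * (stackConst n (1 : Matrix (Fin r) (Fin r) ℝ))ᵀ -
        stackConst n (meanBlock Y) * (stackConst n (meanBlock Y))ᵀ) := by
    ext q q'
    have h := congrFun₂ hY.sum_blk_deviation_mul_transpose q.2 q'.2
    rw [Matrix.sum_apply] at h ⊢
    refine h.trans ?_
    conv_lhs => rw [← Matrix.one_mul (1 : Matrix (Fin r) (Fin r) ℝ)]
    nth_rewrite 2 [← transpose_one]
    rfl
  rw [hsum, inv_smul_smul₀ (NeZero.ne _)]
  simp only [deviation, transpose_sub, Matrix.sub_mul, Matrix.mul_sub]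
  abel

lemma Feasible.abs_ip_mul_transpose_sub_le [NeZero n] (hY : Feasible Y) :
    |ip Δ (Y * Yᵀ - stackConst n 1 * (stackConst n (1 : Matrix (Fin r) (Fin r) ℝ))ᵀ)| ≤
      3 * (opNorm Δ * (√(r * n) * √(frobSq (deviation Y)))) := by
  set W := deviation Y with hW
  have h₁ : |ip Δ (W * Yᵀ)| ≤ opNorm Δ * (√(r * n) * √(frobSq W)) := by
    have := abs_ip_mul_transpose_le Δ W Y
    rwa [hY.frobSq_eq, mul_comm √_] at this
  have h₂ : |ip Δ (stackConst n (meanBlock Y) * Wᵀ)| ≤ opNorm Δ * (√(r * n) * √(frobSq W)) := by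
    refine (abs_ip_mul_transpose_le _ _ _).trans ?_
    have := opNorm_nonneg Δ
    gcongr
    exact hY.frobSq_stackConst_meanBlock_le
  have h₃ : |(n : ℝ)⁻¹ * ∑ i, ip Δ (stackConst n (blk W i) * (stackConst n (blk W i))ᵀ)| ≤
      opNorm Δ * (√(r * n) * √(frobSq W)) := by
    calc _ ≤ (n : ℝ)⁻¹ * ∑ i, opNorm Δ * (n * frobSq (blk W i)) := by
          rw [abs_mul, abs_of_nonneg (inv_nonneg.2 n.cast_nonneg)]
          gcongr
          refine (Finset.abs_sum_le_sum_abs _ _).trans (Finset.sum_le_sum fun i _ => ?_)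
          have := abs_ip_mul_transpose_le Δ (stackConst n (blk W i)) (stackConst n (blk W i))
          rwa [Real.mul_self_sqrt (frobSq_nonneg _), frobSq_stackConst] at this
      _ = opNorm Δ * (√(frobSq W) * √(frobSq W)) := by
          rw [Real.mul_self_sqrt (frobSq_nonneg _), frobSq_eq_sum_blk, ← Finset.mul_sum,
            ← Finset.mul_sum]
          have := NeZero.ne (n : ℝ)
          field_simp
      _ ≤ _ := mul_le_mul_of_nonneg_left hY.sqrt_frobSq_deviation_mul_self_le (opNorm_nonneg Δ)
  rw [hY.mul_transpose_sub_eq, ip_sub_right, ip_add_right, ip_smul_right, ip_sum_right, ← hW]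
  linarith [abs_sub (ip Δ (W * Yᵀ) + ip Δ (stackConst n (meanBlock Y) * Wᵀ))
    ((n : ℝ)⁻¹ * ∑ i, ip Δ (stackConst n (blk W i) * (stackConst n (blk W i))ᵀ)),
    abs_add_le (ip Δ (W * Yᵀ)) (ip Δ (stackConst n (meanBlock Y) * Wᵀ))]

lemma Feasible.frobSq_diagonal_mul (hY : Feasible Y) (f : Fin n → ℝ) :
    frobSq (diagonal (fun q : Fin n × Fin r => f q.1) * Y) = r * (f ⬝ᵥ f) := by
  have hblk : ∀ i, frobSq (blk (diagonal (fun q : Fin n × Fin r => f q.1) * Y) i) =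
      f i ^ 2 * frobSq (blk Y i) := fun i => by
    simp only [frobSq, blk, of_apply, diagonal_mul, mul_pow, Finset.mul_sum]
  simp only [frobSq_eq_sum_blk, hblk, hY.frobSq_blk, ← Finset.sum_mul, dotProduct, ← sq]
  exact mul_comm _ _

lemma Feasible.abs_ip_blockScale_vecMulVec_le (hY : Feasible Y) (f g : Fin n → ℝ) :
    |ip Δ (blockScale (vecMulVec f g) (Y * Yᵀ))| ≤
      opNorm Δ * (r * (√(f ⬝ᵥ f) * √(g ⬝ᵥ g))) := by
  have hfactor : blockScale (vecMulVec f g) (Y * Yᵀ) =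
      (diagonal (fun q : Fin n × Fin r => f q.1) * Y) *
        (diagonal (fun q : Fin n × Fin r => g q.1) * Y)ᵀ := by
    rw [transpose_mul, diagonal_transpose, Matrix.mul_assoc, ← Matrix.mul_assoc Y]
    ext q q'
    rw [diagonal_mul, mul_diagonal, blockScale, hadamard_apply, submatrix_apply, vecMulVec_apply]
    ring
  rw [hfactor]
  refine (abs_ip_mul_transpose_le _ _ _).trans_eq ?_
  rw [hY.frobSq_diagonal_mul, hY.frobSq_diagonal_mul, Real.sqrt_mul r.cast_nonneg,
    Real.sqrt_mul r.cast_nonneg, mul_mul_mul_comm, Real.mul_self_sqrt r.cast_nonneg]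

lemma halfSqDist_eq_deviation (Y : Matrix (Fin n × Fin r) (Fin p) ℝ) :
    halfSqDist Y = (1 / 2 : ℝ) • (vecMulVec (fun i => frobSq (blk (deviation Y) i)) 1 +
        vecMulVec 1 fun i => frobSq (blk (deviation Y) i)) -
      ∑ a, ∑ b, vecMulVec (fun i => deviation Y (i, a) b) fun i => deviation Y (i, a) b := by
  ext i j
  have hij : blk Y i - blk Y j = blk (deviation Y) i - blk (deviation Y) j := by
    rw [blk_deviation, blk_deviation, sub_sub_sub_cancel_right]
  have htrace : (blk (deviation Y) i * (blk (deviation Y) j)ᵀ).trace =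
      ∑ a, ∑ b, deviation Y (i, a) b * deviation Y (j, a) b :=
    rfl
  rw [halfSqDist, of_apply, hij, frobSq_sub, htrace]
  simp only [Matrix.sub_apply, Matrix.smul_apply,
    Matrix.add_apply, vecMulVec_apply, Matrix.sum_apply, Pi.one_apply, smul_eq_mul]
  ring

lemma ip_blockScale_halfSqDist (Y : Matrix (Fin n × Fin r) (Fin p) ℝ)
    (M : Matrix (Fin n × Fin r) (Fin n × Fin r) ℝ) :
    ip Δ (blockScale (halfSqDist Y) M) =
      (ip Δ (blockScale (vecMulVec (fun i => frobSq (blk (deviation Y) i)) 1) M) +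
        ip Δ (blockScale (vecMulVec 1 fun i => frobSq (blk (deviation Y) i)) M)) / 2 -
      ∑ a, ∑ b, ip Δ (blockScale
        (vecMulVec (fun i => deviation Y (i, a) b) fun i => deviation Y (i, a) b) M) := by
  have hscale : blockScale (halfSqDist Y) M =
      (1 / 2 : ℝ) • (blockScale (vecMulVec (fun i => frobSq (blk (deviation Y) i)) 1) M +
        blockScale (vecMulVec 1 fun i => frobSq (blk (deviation Y) i)) M) -
      ∑ a, ∑ b, blockScale
        (vecMulVec (fun i => deviation Y (i, a) b) fun i => deviation Y (i, a) b) M := by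
    ext q q'
    simp only [halfSqDist_eq_deviation, blockScale, hadamard_apply, submatrix_apply,
      Matrix.sub_apply, Matrix.smul_apply, Matrix.add_apply, Matrix.sum_apply, smul_eq_mul,
      sub_mul, add_mul, mul_assoc, Finset.sum_mul]
  rw [hscale, ip_sub_right, ip_smul_right, ip_add_right]
  simp only [ip_sum_right]
  ring

lemma Feasible.sqrt_frobSq_blk_deviation_le [NeZero n] (hY : Feasible Y) :
    r * √((fun i => frobSq (blk (deviation Y) i)) ⬝ᵥ fun i => frobSq (blk (deviation Y) i)) *
      √n ≤ 2 * r * (√(r * n) * √(frobSq (deviation Y))) := by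
  have hsq : (fun i => frobSq (blk (deviation Y) i)) ⬝ᵥ (fun i => frobSq (blk (deviation Y) i)) ≤
      2 ^ 2 * r * frobSq (deviation Y) := by
    rw [dotProduct, frobSq_eq_sum_blk, Finset.mul_sum]
    refine Finset.sum_le_sum fun i _ => mul_le_mul_of_nonneg_right ?_ (frobSq_nonneg _)
    linarith [hY.frobSq_blk_deviation_le i]
  calc _ ≤ r * √(2 ^ 2 * r * frobSq (deviation Y)) * √n := by gcongr
    _ = _ := by
      rw [Real.sqrt_mul (by positivity), Real.sqrt_mul (by positivity),
        Real.sqrt_sq zero_le_two, Real.sqrt_mul r.cast_nonneg]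
      ring

lemma Feasible.abs_sum_ip_blockScale_deviation_le [NeZero n] (hY : Feasible Y) :
    |∑ a, ∑ b, ip Δ (blockScale
      (vecMulVec (fun i => deviation Y (i, a) b) fun i => deviation Y (i, a) b) (Y * Yᵀ))| ≤
      r * (opNorm Δ * (√(r * n) * √(frobSq (deviation Y)))) := by
  have hterm : ∀ f : Fin n → ℝ, |ip Δ (blockScale (vecMulVec f f) (Y * Yᵀ))| ≤
      opNorm Δ * (r * ∑ i, f i ^ 2) := fun f => by
    have hf : 0 ≤ f ⬝ᵥ f := dotProduct_self_star_nonneg f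
    have := hY.abs_ip_blockScale_vecMulVec_le Δ f f
    rw [Real.mul_self_sqrt hf] at this
    simpa only [dotProduct, ← sq] using this
  have hfrob : frobSq (deviation Y) = ∑ a, ∑ b, ∑ i, deviation Y (i, a) b ^ 2 := by
    rw [frobSq, Fintype.sum_prod_type, Finset.sum_comm]
    exact Finset.sum_congr rfl fun a _ => Finset.sum_comm
  calc _ ≤ ∑ a, ∑ b, opNorm Δ * (r * ∑ i, deviation Y (i, a) b ^ 2) :=
        (Finset.abs_sum_le_sum_abs _ _).trans <| Finset.sum_le_sum fun a _ =>
          (Finset.abs_sum_le_sum_abs _ _).trans <| Finset.sum_le_sum fun b _ => hterm _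
    _ = r * (opNorm Δ * (√(frobSq (deviation Y)) * √(frobSq (deviation Y)))) := by
      rw [Real.mul_self_sqrt (frobSq_nonneg _), hfrob]
      simp only [← Finset.mul_sum]
      ring
    _ ≤ _ := by
      have := mul_le_mul_of_nonneg_left hY.sqrt_frobSq_deviation_mul_self_le (opNorm_nonneg Δ)
      gcongr

lemma Feasible.abs_ip_blockScale_halfSqDist_le [NeZero n] (hY : Feasible Y) :
    |ip Δ (blockScale (halfSqDist Y) (Y * Yᵀ))| ≤
      3 * r * (opNorm Δ * (√(r * n) * √(frobSq (deviation Y)))) := by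
  set W := deviation Y
  set w : Fin n → ℝ := fun i => frobSq (blk W i)
  have hone : (1 : Fin n → ℝ) ⬝ᵥ 1 = n := by
    rw [one_dotProduct_one, Fintype.card_fin]
  have hweights : opNorm Δ * (r * (√(w ⬝ᵥ w) * √n)) ≤
      2 * r * (opNorm Δ * (√(r * n) * √(frobSq W))) := by
    have := mul_le_mul_of_nonneg_left hY.sqrt_frobSq_blk_deviation_le (opNorm_nonneg Δ)
    linarith
  have h₁ : |ip Δ (blockScale (vecMulVec w 1) (Y * Yᵀ))| ≤ _ :=
    hY.abs_ip_blockScale_vecMulVec_le Δ w 1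
  have h₂ : |ip Δ (blockScale (vecMulVec 1 w) (Y * Yᵀ))| ≤ _ :=
    hY.abs_ip_blockScale_vecMulVec_le Δ 1 w
  rw [hone] at h₁ h₂
  rw [mul_comm √_] at h₂
  rw [ip_blockScale_halfSqDist, abs_le]
  have h₃ := hY.abs_sum_ip_blockScale_deviation_le Δ
  rw [abs_le] at h₁ h₂ h₃
  constructor <;> linarith [h₁.1, h₁.2, h₂.1, h₂.2, h₃.1, h₃.2]

lemma Feasible.abs_ip_averagedVariation_le [NeZero n] (hp : 2 ≤ p) (hY : Feasible Y) :
    |ip Δ (averagedVariation Y)| ≤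
      3 * ((p : ℝ) + r - 2) * (opNorm Δ * (√(r * n) * √(frobSq (deviation Y)))) := by
  have hp' : (0 : ℝ) ≤ p - 2 := sub_nonneg.2 (by exact_mod_cast hp)
  rw [averagedVariation, ip_add_right, ip_smul_right]
  refine (abs_add_le _ _).trans ?_
  rw [abs_mul, abs_of_nonneg hp']
  linarith [mul_le_mul_of_nonneg_left (hY.abs_ip_mul_transpose_sub_le Δ) hp',
    hY.abs_ip_blockScale_halfSqDist_le Δ]

end NoiseBound

section EnergyBound

variable {n r p : ℕ} {L : Matrix (Fin n) (Fin n) ℝ} {Y : Matrix (Fin n × Fin r) (Fin p) ℝ}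
  {Δ : Matrix (Fin n × Fin r) (Fin n × Fin r) ℝ}

lemma IsLaplacian.lam2_mul_frobSq_deviation_le [NeZero n] (hL : IsLaplacian L)
    (Y : Matrix (Fin n × Fin r) (Fin p) ℝ) : lam2 L * frobSq (deviation Y) ≤
      ip (L ⊗ₖ (1 : Matrix (Fin r) (Fin r) ℝ)) (Y * Yᵀ) := by
  have hdist : halfSqDist Y = halfSqDist (deviation Y) := by
    ext i j
    rw [halfSqDist, halfSqDist, of_apply, of_apply, blk_deviation, blk_deviation,
      sub_sub_sub_cancel_right]
  rw [hL.ip_mul_transpose_eq, hdist, ← hL.ip_mul_transpose_eq]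
  refine lam2_mul_frobSq_le L fun a c => ?_
  have h := congrFun₂ (sum_blk_deviation Y) a c
  rwa [Matrix.sum_apply] at h

lemma IsSecondOrderCritical.mul_ip_le [NeZero n] (hL : IsLaplacian L) (hp : 2 ≤ p)
    (hY : IsSecondOrderCritical (L ⊗ₖ (1 : Matrix (Fin r) (Fin r) ℝ) - Δ) Y) :
    ((p : ℝ) - r - 2) * ip (L ⊗ₖ (1 : Matrix (Fin r) (Fin r) ℝ)) (Y * Yᵀ) ≤
      3 * ((p : ℝ) + r - 2) * (opNorm Δ * (√(r * n) * √(frobSq (deviation Y)))) := by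
  have hcurv := hY.ip_averagedVariation_nonpos
  rw [ip_sub_left] at hcurv
  linarith [hL.mul_ip_le_ip_averagedVariation hY.1, le_of_abs_le
    (hY.1.abs_ip_averagedVariation_le Δ hp)]

/- With `t = C * δ * s`, AM-GM absorbs the deviation `ω` into the energy:
`gap * F ≤ ((3 / 2 * t)² + gap * F) / 2`, so `F ≤ 9 / 4 * t² / gap ≤ 9 / 20 * gap`. -/
lemma add_add_mul_lt_of_gap {δ s ω F gap C : ℝ} (hδ : 0 ≤ δ) (hs : 1 ≤ s) (hC : 2 ≤ C)
    (hsmall : δ < gap / (√5 * C * s)) (hgap : gap * ω ^ 2 ≤ F)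
    (hF : F ≤ 3 / 2 * C * (δ * (s * ω))) : δ + F + δ * s < gap := by
  set t := C * (δ * s)
  have ht₀ : 0 ≤ t := by positivity
  have hsqrt : 2 < √5 := Real.lt_sqrt_of_sq_lt (by norm_num)
  have hnoise : √5 * t < gap := by
    have := (lt_div_iff₀ (by positivity)).1 hsmall
    linarith
  have hnoise₂ : 2 * t < gap := (mul_le_mul_of_nonneg_right hsqrt.le ht₀).trans_lt hnoise
  have hgap₀ : 0 < gap := by linarith
  have hlinear : δ + δ * s ≤ t := by nlinarith [mul_nonneg hδ (sub_nonneg.2 hs)]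
  have hamgm : gap * F ≤ ((3 / 2 * t) ^ 2 + (gap * ω) ^ 2) / 2 := by
    calc gap * F ≤ gap * (3 / 2 * C * (δ * (s * ω))) := mul_le_mul_of_nonneg_left hF hgap₀.le
      _ = 2 * (3 / 2 * t) * (gap * ω) / 2 := by ring
      _ ≤ _ := by linarith [two_mul_le_add_sq (3 / 2 * t) (gap * ω)]
  have habsorb : (gap * ω) ^ 2 ≤ gap * F := by
    calc (gap * ω) ^ 2 = gap * (gap * ω ^ 2) := by ring
      _ ≤ gap * F := mul_le_mul_of_nonneg_left hgap hgap₀.le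
  have ht₂ : 5 * t ^ 2 ≤ gap ^ 2 := by
    have := pow_le_pow_left₀ (by positivity) hnoise.le 2
    rwa [mul_pow, Real.sq_sqrt (by norm_num)] at this
  have henergy : F ≤ 9 / 20 * gap := le_of_mul_le_mul_left (by linarith) hgap₀
  linarith

lemma IsSecondOrderCritical.noise_add_energy_lt_lam2 [NeZero n] [NeZero r] (hp : r + 2 < p)
    (hL : IsLaplacian L)
    (hΔ : opNorm Δ < lam2 L / (√5 * (2 * ((p : ℝ) + r - 2) / ((p : ℝ) - r - 2)) * √(r * n)))
    (hY : IsSecondOrderCritical (L ⊗ₖ (1 : Matrix (Fin r) (Fin r) ℝ) - Δ) Y) :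
    opNorm Δ + ip (L ⊗ₖ (1 : Matrix (Fin r) (Fin r) ℝ)) (Y * Yᵀ) + opNorm Δ * √(r * n) <
      lam2 L := by
  have hpr : (0 : ℝ) < p - r - 2 := by
    have : ((r + 2 : ℕ) : ℝ) < p := Nat.cast_lt.2 hp
    push_cast at this
    linarith
  refine add_add_mul_lt_of_gap (ω := √(frobSq (deviation Y))) (opNorm_nonneg Δ)
    (Real.one_le_sqrt.2 ?_) ?_ hΔ ?_ ?_
  · exact_mod_cast Nat.one_le_iff_ne_zero.2 (NeZero.ne (r * n))
  · rw [le_div_iff₀ hpr]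
    linarith [r.cast_nonneg (α := ℝ)]
  · rw [Real.sq_sqrt (frobSq_nonneg _)]
    exact hL.lam2_mul_frobSq_deviation_le Y
  · have := hY.mul_ip_le hL (by omega)
    rw [← le_div_iff₀' hpr] at this
    exact this.trans_eq (by ring)

end EnergyBound

section QuadraticForm

variable {n r p : ℕ} {Y : Matrix (Fin n × Fin r) (Fin p) ℝ}

lemma ip_vecMulVec {m : Type*} [Fintype m] (A : Matrix m m ℝ) (x : m → ℝ) :
    ip A (vecMulVec x x) = x ⬝ᵥ (A *ᵥ x) := by
  rw [ip, transpose_vecMulVec, mul_vecMulVec, trace_vecMulVec, dotProduct_comm]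

lemma frobSq_vecMulVec {m m' : Type*} [Fintype m] [Fintype m'] (u : m → ℝ) (v : m' → ℝ) :
    frobSq (vecMulVec u v) = (u ⬝ᵥ u) * (v ⬝ᵥ v) := by
  simp only [frobSq, vecMulVec_apply, mul_pow, dotProduct, ← sq, Finset.sum_mul_sum]

lemma vecMul_dotProduct_self_le {m m' : Type*} [Fintype m] [Fintype m'] (v : m → ℝ)
    (M : Matrix m m' ℝ) : (v ᵥ* M) ⬝ᵥ (v ᵥ* M) ≤ (v ⬝ᵥ v) * frobSq M := by
  rw [frobSq_eq_sum_col, Finset.mul_sum, dotProduct]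
  refine Finset.sum_le_sum fun c _ => ?_
  simp only [vecMul, dotProduct, col_apply, ← sq]
  exact Finset.sum_mul_sq_le_sq_mul_sq _ _ _

lemma vecMul_dotProduct_vecMul {l m m' : Type*} [Fintype l] [Fintype m] [Fintype m'] (u : l → ℝ)
    (v : m → ℝ) (A : Matrix l m' ℝ) (B : Matrix m m' ℝ) :
    (u ᵥ* A) ⬝ᵥ (v ᵥ* B) = (u ᵥ* (A * Bᵀ)) ⬝ᵥ v := by
  rw [← vecMul_vecMul, ← dotProduct_mulVec (u ᵥ* A), mulVec_transpose]

lemma Feasible.vecMul_blk_dotProduct_self (hY : Feasible Y) (i : Fin n) (v : Fin r → ℝ) :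
    (v ᵥ* blk Y i) ⬝ᵥ (v ᵥ* blk Y i) = v ⬝ᵥ v := by
  rw [vecMul_dotProduct_vecMul, hY i, vecMul_one]

lemma Feasible.dotProduct_self_sub_le (hY : Feasible Y) (i j : Fin n) (v : Fin r → ℝ) :
    v ⬝ᵥ v - (v ᵥ* blk Y i) ⬝ᵥ (v ᵥ* blk Y j) ≤ halfSqDist Y i j * (v ⬝ᵥ v) := by
  have h := vecMul_dotProduct_self_le v (blk Y i - blk Y j)
  simp only [vecMul_sub, sub_dotProduct, dotProduct_sub, hY.vecMul_blk_dotProduct_self,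
    dotProduct_comm (v ᵥ* blk Y j) (v ᵥ* blk Y i)] at h
  rw [halfSqDist, of_apply]
  linarith

lemma blk_SBD_vecMulVec_mul (x : Fin n × Fin r → ℝ) (Y : Matrix (Fin n × Fin r) (Fin p) ℝ)
    (i : Fin n) : blk (SBD (vecMulVec x x) * Y) i =
      vecMulVec (fun a => x (i, a)) ((fun a => x (i, a)) ᵥ* blk Y i) := by
  have hdiag : ∀ a j b, SBD (vecMulVec x x) (i, a) (j, b) =
      if i = j then x (i, a) * x (i, b) else 0 := fun a j b => by
    obtain rfl | hij := eq_or_ne i j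
    · simp only [SBD, of_apply, vecMulVec_apply, if_true]
      ring
    · simp only [SBD, of_apply, if_neg hij]
  ext a c
  simp only [blk, of_apply, mul_apply, Fintype.sum_prod_type, hdiag, ite_mul, zero_mul,
    vecMulVec_apply, vecMul, dotProduct, Finset.mul_sum, mul_assoc]
  rw [Finset.sum_eq_single i (fun j _ hj => by simp only [if_neg hj.symm, Finset.sum_const_zero])
    fun hi => absurd (Finset.mem_univ i) hi]
  simp only [if_true]

lemma dotProduct_self_eq_sum (x : Fin n × Fin r → ℝ) :
    x ⬝ᵥ x = ∑ i, (fun a => x (i, a)) ⬝ᵥ fun a => x (i, a) :=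
  Fintype.sum_prod_type _

lemma dotProduct_self_block_le (x : Fin n × Fin r → ℝ) (i : Fin n) :
    ((fun a => x (i, a)) ⬝ᵥ fun a => x (i, a)) ≤ x ⬝ᵥ x := by
  rw [dotProduct_self_eq_sum]
  exact Finset.single_le_sum (f := fun i => (fun a => x (i, a)) ⬝ᵥ fun a => x (i, a))
    (fun j _ => dotProduct_self_star_nonneg _) (Finset.mem_univ i)

lemma Feasible.frobSq_SBD_vecMulVec_mul_le (hY : Feasible Y) (x : Fin n × Fin r → ℝ) :
    frobSq (SBD (vecMulVec x x) * Y) ≤ (x ⬝ᵥ x) ^ 2 := by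
  simp only [frobSq_eq_sum_blk, blk_SBD_vecMulVec_mul, frobSq_vecMulVec,
    hY.vecMul_blk_dotProduct_self]
  calc _ ≤ ∑ i, (x ⬝ᵥ x) * ((fun a => x (i, a)) ⬝ᵥ fun a => x (i, a)) :=
        Finset.sum_le_sum fun i _ => mul_le_mul_of_nonneg_right (dotProduct_self_block_le x i)
          (dotProduct_self_star_nonneg _)
    _ = (x ⬝ᵥ x) ^ 2 := by rw [← Finset.mul_sum, ← dotProduct_self_eq_sum, sq]

lemma ip_SBD_mul_vecMulVec (A : Matrix (Fin n × Fin r) (Fin n × Fin r) ℝ)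
    (Y : Matrix (Fin n × Fin r) (Fin p) ℝ) (x : Fin n × Fin r → ℝ) :
    ip (SBD (A * Y * Yᵀ)) (vecMulVec x x) = ip A (SBD (vecMulVec x x) * Y * Yᵀ) := by
  rw [ip_SBD_left, ip, ip, transpose_mul, transpose_mul, transpose_transpose]
  simp only [Matrix.mul_assoc]

lemma Feasible.ip_SBD_noise_ge (hY : Feasible Y) (Δ : Matrix (Fin n × Fin r) (Fin n × Fin r) ℝ)
    (x : Fin n × Fin r → ℝ) :
    -(opNorm Δ * √(r * n) * (x ⬝ᵥ x)) ≤ ip (SBD (Δ * Y * Yᵀ)) (vecMulVec x x) := by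
  have hx : 0 ≤ x ⬝ᵥ x := dotProduct_self_star_nonneg x
  rw [ip_SBD_mul_vecMulVec]
  refine neg_le_of_abs_le ((abs_ip_mul_transpose_le _ _ _).trans ?_)
  rw [hY.frobSq_eq, mul_assoc, mul_comm √(r * n : ℝ)]
  refine mul_le_mul_of_nonneg_left ?_ (opNorm_nonneg Δ)
  gcongr
  exact Real.sqrt_le_iff.2 ⟨hx, hY.frobSq_SBD_vecMulVec_mul_le x⟩

lemma IsLaplacian.ip_SBD_le {L : Matrix (Fin n) (Fin n) ℝ} (hL : IsLaplacian L) (hY : Feasible Y)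
    (x : Fin n × Fin r → ℝ) :
    ip (SBD (L ⊗ₖ (1 : Matrix (Fin r) (Fin r) ℝ) * Y * Yᵀ)) (vecMulVec x x) ≤
      ip (L ⊗ₖ (1 : Matrix (Fin r) (Fin r) ℝ)) (Y * Yᵀ) * (x ⬝ᵥ x) := by
  let v : Fin n → Fin r → ℝ := fun i a => x (i, a)
  let q : Fin n → Fin n → ℝ := fun i j => v i ⬝ᵥ v i - (v i ᵥ* blk Y i) ⬝ᵥ (v i ᵥ* blk Y j)
  have htrace : ∀ i j, ((SBD (vecMulVec x x) * Y * Yᵀ).submatrix (Prod.mk i) (Prod.mk j)).trace =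
      v i ⬝ᵥ v i - q i j := fun i j => by
    change (blk (SBD (vecMulVec x x) * Y) i * (blk Y j)ᵀ).trace = _
    rw [blk_SBD_vecMulVec_mul, vecMulVec_mul, vecMul_transpose, trace_vecMulVec, sub_sub_cancel]
    rw [dotProduct_mulVec, dotProduct_comm]
  have hq : ip (SBD (L ⊗ₖ (1 : Matrix (Fin r) (Fin r) ℝ) * Y * Yᵀ)) (vecMulVec x x) =
      -∑ i, ∑ j, L i j * q i j := by
    simp only [ip_SBD_mul_vecMulVec, ip_kronecker_one, htrace, mul_sub, Finset.sum_sub_distrib,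
      ← Finset.sum_mul, hL.sum_row, zero_mul, zero_sub,
      Finset.sum_neg_distrib]
  have hcompare : ∑ i, ∑ j, L i j * (halfSqDist Y i j * (x ⬝ᵥ x) - q i j) ≤ 0 :=
    hL.sum_mul_nonpos (fun i j => sub_nonneg.2 <| (hY.dotProduct_self_sub_le i j _).trans <|
      mul_le_mul_of_nonneg_left (dotProduct_self_block_le x i) (halfSqDist_nonneg i j))
      fun i => by
        change halfSqDist Y i i * _ - (_ - (v i ᵥ* blk Y i) ⬝ᵥ (v i ᵥ* blk Y i)) = 0
        rw [halfSqDist_self, hY.vecMul_blk_dotProduct_self, sub_self, zero_mul, sub_zero]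
  rw [hq, hL.ip_mul_transpose_eq, neg_mul, Finset.sum_mul]
  simp only [mul_sub, Finset.sum_sub_distrib, ← mul_assoc, ← Finset.sum_mul] at hcompare ⊢
  linarith

lemma IsLaplacian.quadForm_Smat_ge {L : Matrix (Fin n) (Fin n) ℝ} (hL : IsLaplacian L)
    (hY : Feasible Y) (Δ : Matrix (Fin n × Fin r) (Fin n × Fin r) ℝ) {x : Fin n × Fin r → ℝ}
    (hx : ∀ a, ∑ i, x (i, a) = 0) :
    (lam2 L - (opNorm Δ + ip (L ⊗ₖ (1 : Matrix (Fin r) (Fin r) ℝ)) (Y * Yᵀ) +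
      opNorm Δ * √(r * n))) * (x ⬝ᵥ x) ≤
      x ⬝ᵥ (Smat (L ⊗ₖ (1 : Matrix (Fin r) (Fin r) ℝ) - Δ) Y *ᵥ x) := by
  have hSBD : SBD ((L ⊗ₖ (1 : Matrix (Fin r) (Fin r) ℝ) - Δ) * Y * Yᵀ) =
      SBD (L ⊗ₖ (1 : Matrix (Fin r) (Fin r) ℝ) * Y * Yᵀ) - SBD (Δ * Y * Yᵀ) := by
    ext q q'
    simp only [SBD, Matrix.sub_mul, of_apply, Matrix.sub_apply]
    split_ifs <;> ring
  have hgap : lam2 L * (x ⬝ᵥ x) ≤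
      ip (L ⊗ₖ (1 : Matrix (Fin r) (Fin r) ℝ)) (vecMulVec x x) := by
    have := lam2_mul_frobSq_le L (M := replicateCol Unit x) fun a _ => hx a
    rwa [frobSq_eq_sum_col, Fintype.sum_unique, transpose_replicateCol,
      ← vecMulVec_eq Unit] at this
  have hnoise : ip Δ (vecMulVec x x) ≤ opNorm Δ * (x ⬝ᵥ x) := by
    have hxx : 0 ≤ x ⬝ᵥ x := dotProduct_self_star_nonneg x
    have := le_of_abs_le (abs_dotProduct_mulVec_le Δ x x)
    rwa [Real.mul_self_sqrt hxx, ← ip_vecMulVec] at this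
  rw [← ip_vecMulVec, Smat, hSBD, ip_sub_left, ip_sub_left, ip_sub_left]
  linarith [hY.ip_SBD_noise_ge Δ x, hL.ip_SBD_le hY x]

end QuadraticForm

section Gauge

variable {n r p : ℕ} {κ : Type*} {Zb : Fin n → Matrix (Fin r) (Fin r) ℝ}

lemma Dmat_transpose (Zb : Fin n → Matrix (Fin r) (Fin r) ℝ) :
    (Dmat Zb)ᵀ = Dmat fun i => (Zb i)ᵀ := by
  ext ⟨i, a⟩ ⟨j, b⟩
  obtain rfl | hij := eq_or_ne i j
  · simp only [Dmat, transpose_apply, of_apply, if_true]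
  · simp only [Dmat, transpose_apply, of_apply, if_neg hij, if_neg hij.symm]

lemma Dmat_mul_apply (Zb : Fin n → Matrix (Fin r) (Fin r) ℝ) (M : Matrix (Fin n × Fin r) κ ℝ)
    (i : Fin n) (a : Fin r) (c : κ) : (Dmat Zb * M) (i, a) c = ∑ b, Zb i a b * M (i, b) c := by
  simp only [mul_apply, Dmat, of_apply, Fintype.sum_prod_type, ite_mul, zero_mul]
  rw [Finset.sum_eq_single i (fun j _ hj => by simp only [if_neg hj.symm, Finset.sum_const_zero])
    fun hi => absurd (Finset.mem_univ i) hi]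
  simp only [if_true]

lemma Dmat_mul_mul_transpose_apply (Zb : Fin n → Matrix (Fin r) (Fin r) ℝ)
    (M : Matrix (Fin n × Fin r) (Fin n × Fin r) ℝ) (i j : Fin n) (a b : Fin r) :
    (Dmat Zb * M * (Dmat Zb)ᵀ) (i, a) (j, b) =
      ∑ c, ∑ d, Zb i a c * Zb j b d * M (i, c) (j, d) := by
  rw [Matrix.mul_assoc, Dmat_mul_apply]
  refine Finset.sum_congr rfl fun c _ => ?_
  rw [← transpose_apply (M * _), transpose_mul, transpose_transpose, Dmat_mul_apply,
    Finset.mul_sum]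
  exact Finset.sum_congr rfl fun d _ => by rw [transpose_apply]; ring

lemma SBD_conj (Zb : Fin n → Matrix (Fin r) (Fin r) ℝ)
    (M : Matrix (Fin n × Fin r) (Fin n × Fin r) ℝ) :
    SBD (Dmat Zb * M * (Dmat Zb)ᵀ) = Dmat Zb * SBD M * (Dmat Zb)ᵀ := by
  ext ⟨i, a⟩ ⟨j, b⟩
  rw [SBD, of_apply]
  simp only [Dmat_mul_mul_transpose_apply]
  obtain rfl | hij := eq_or_ne i j
  · rw [if_pos rfl, Finset.sum_comm (f := fun c d => Zb i b c * Zb i a d * M (i, c) (i, d))]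
    simp only [SBD, of_apply, if_true, ← Finset.sum_add_distrib, Finset.sum_div]
    exact Finset.sum_congr rfl fun c _ => Finset.sum_congr rfl fun d _ => by ring
  · simp only [SBD, of_apply, if_neg hij, mul_zero, Finset.sum_const_zero]

lemma blk_Dmat_mul (Zb : Fin n → Matrix (Fin r) (Fin r) ℝ) (Y : Matrix (Fin n × Fin r) (Fin p) ℝ)
    (i : Fin n) : blk (Dmat Zb * Y) i = Zb i * blk Y i := by
  ext a c
  exact Dmat_mul_apply Zb Y i a c

lemma Dmat_mul_transpose_self (hZb : ∀ i, Zb i * (Zb i)ᵀ = 1) :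
    Dmat Zb * (Dmat Zb)ᵀ = 1 := by
  ext ⟨i, a⟩ ⟨j, b⟩
  have horth := congrFun₂ (hZb i) a b
  rw [mul_apply] at horth
  rw [Dmat_mul_apply]
  obtain rfl | hij := eq_or_ne i j
  · simpa [Dmat, one_apply] using horth
  · simp [Dmat, one_apply, hij, hij.symm]

lemma Dmat_transpose_mul_self (hZb : ∀ i, Zb i * (Zb i)ᵀ = 1) : (Dmat Zb)ᵀ * Dmat Zb = 1 :=
  mul_eq_one_comm.1 (Dmat_mul_transpose_self hZb)

lemma Smat_conj (hZb : ∀ i, Zb i * (Zb i)ᵀ = 1) (M : Matrix (Fin n × Fin r) (Fin n × Fin r) ℝ)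
    (Y : Matrix (Fin n × Fin r) (Fin p) ℝ) :
    Smat (Dmat Zb * M * (Dmat Zb)ᵀ) (Dmat Zb * Y) = Dmat Zb * Smat M Y * (Dmat Zb)ᵀ := by
  have hcancel : Dmat Zb * M * (Dmat Zb)ᵀ * (Dmat Zb * Y) * (Dmat Zb * Y)ᵀ =
      Dmat Zb * (M * Y * Yᵀ) * (Dmat Zb)ᵀ := by
    rw [Matrix.mul_assoc _ (Dmat Zb)ᵀ, ← Matrix.mul_assoc (Dmat Zb)ᵀ,
      Dmat_transpose_mul_self hZb, Matrix.one_mul, transpose_mul]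
    simp only [Matrix.mul_assoc]
  rw [Smat, hcancel, SBD_conj, Smat, Matrix.mul_sub, Matrix.sub_mul]

lemma IsSecondOrderCritical.conj (hZb : ∀ i, Zb i * (Zb i)ᵀ = 1)
    {M : Matrix (Fin n × Fin r) (Fin n × Fin r) ℝ} {Y : Matrix (Fin n × Fin r) (Fin p) ℝ}
    (hY : IsSecondOrderCritical M Y) :
    IsSecondOrderCritical (Dmat Zb * M * (Dmat Zb)ᵀ) (Dmat Zb * Y) := by
  refine ⟨fun i => ?_, ?_, fun Ydot htangent => ?_⟩
  · rw [blk_Dmat_mul, transpose_mul, Matrix.mul_assoc, ← Matrix.mul_assoc (blk Y i), hY.1 i,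
      Matrix.one_mul, hZb]
  · rw [Smat_conj hZb, Matrix.mul_assoc, ← Matrix.mul_assoc (Dmat Zb)ᵀ,
      Dmat_transpose_mul_self hZb, Matrix.one_mul, Matrix.mul_assoc, hY.2.1, Matrix.mul_zero]
  · have htangent' : ∀ i, blk ((Dmat Zb)ᵀ * Ydot) i * (blk Y i)ᵀ +
        blk Y i * (blk ((Dmat Zb)ᵀ * Ydot) i)ᵀ = 0 := fun i => by
      have hZ : (Zb i)ᵀ * Zb i = 1 := mul_eq_one_comm.1 (hZb i)
      have h := congrArg (fun A => (Zb i)ᵀ * A * Zb i) (htangent i)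
      simp only [blk_Dmat_mul, transpose_mul, Matrix.mul_add, Matrix.add_mul, Matrix.mul_assoc,
        hZ, Matrix.mul_one, Matrix.zero_mul, Matrix.mul_zero] at h
      rw [← Matrix.mul_assoc (Zb i)ᵀ (Zb i), hZ, Matrix.one_mul] at h
      rw [Dmat_transpose, blk_Dmat_mul, transpose_mul, transpose_transpose, Matrix.mul_assoc]
      exact h
    calc 0 ≤ (Smat M Y * ((Dmat Zb)ᵀ * Ydot) * ((Dmat Zb)ᵀ * Ydot)ᵀ).trace :=
          hY.2.2 _ htangent'
      _ = (Smat M Y * (Dmat Zb)ᵀ * Ydot * Ydotᵀ * Dmat Zb).trace := by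
        rw [transpose_mul, transpose_transpose]
        simp only [Matrix.mul_assoc]
      _ = (Smat (Dmat Zb * M * (Dmat Zb)ᵀ) (Dmat Zb * Y) * Ydot * Ydotᵀ).trace := by
        rw [Smat_conj hZb, trace_mul_comm]
        simp only [Matrix.mul_assoc]

open scoped Matrix.Norms.L2Operator in
lemma opNorm_conj (hZb : ∀ i, Zb i * (Zb i)ᵀ = 1)
    (M : Matrix (Fin n × Fin r) (Fin n × Fin r) ℝ) :
    opNorm (Dmat Zb * M * (Dmat Zb)ᵀ) = opNorm M := by
  have hD : Dmat Zb ∈ unitary (Matrix (Fin n × Fin r) (Fin n × Fin r) ℝ) :=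
    ⟨Dmat_transpose_mul_self hZb, Dmat_mul_transpose_self hZb⟩
  rw [opNorm_eq_norm, opNorm_eq_norm]
  exact (CStarRing.norm_mul_mem_unitary _ (Unitary.star_mem hD)).trans
    (CStarRing.norm_mem_unitary_mul _ hD)

lemma mulVec_dotProduct_mulVec_mulVec {m l : Type*} [Fintype m] [Fintype l] (A : Matrix l m ℝ)
    (M : Matrix l l ℝ) (x : m → ℝ) :
    (A *ᵥ x) ⬝ᵥ (M *ᵥ (A *ᵥ x)) = x ⬝ᵥ ((Aᵀ * M * A) *ᵥ x) := by
  rw [mulVec_mulVec, dotProduct_comm, dotProduct_mulVec, ← mulVec_transpose, mulVec_mulVec,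
    dotProduct_comm, Matrix.mul_assoc]

lemma sum_Dmat_transpose_mulVec (Zb : Fin n → Matrix (Fin r) (Fin r) ℝ) (x : Fin n × Fin r → ℝ)
    (a : Fin r) : ∑ i, ((Dmat Zb)ᵀ *ᵥ x) (i, a) = ((Zstack Zb)ᵀ *ᵥ x) a := by
  have hentry : ∀ i, ((Dmat Zb)ᵀ *ᵥ x) (i, a) = ∑ b, Zb i b a * x (i, b) := fun i => by
    have := Dmat_mul_apply (fun i => (Zb i)ᵀ) (replicateCol Unit x) i a ()
    rwa [← Dmat_transpose] at this
  rw [Finset.sum_congr rfl fun i _ => hentry i]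
  simp only [mulVec, dotProduct, transpose_apply, Zstack, of_apply, Fintype.sum_prod_type]

end Gauge

/-- Positive definiteness of the quadratic form of `S` on the kernel of `C`. When moreover
`S * Z = 0` for a suitable `Z`, this is the dual certificate of the semidefinite relaxation. -/
def PosDefOnKer {m κ : Type*} [Fintype m] (C : Matrix κ m ℝ) (S : Matrix m m ℝ) : Prop :=
  ∀ x, C *ᵥ x = 0 → x ≠ 0 → 0 < x ⬝ᵥ (S *ᵥ x)

namespace PosDefOnKer

variable {m κ ι : Type*} [Fintype m] [DecidableEq κ]
  {C : Matrix κ m ℝ} {S : Matrix m m ℝ} {Z : Matrix m κ ℝ} {e : κ → m}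

lemma exists_mulVec_sub [Fintype κ] (hS : PosDefOnKer C S) (hSZ : S * Z = 0)
    (hZ : Z.submatrix e id = 1) (x : m → ℝ) : ∃ y, C *ᵥ (x - Z *ᵥ y) = 0 := by
  have hinj : Function.Injective (C * Z).mulVec := by
    rw [← coe_mulVecLin, injective_iff_map_eq_zero]
    intro y hy
    have hker : C *ᵥ (Z *ᵥ y) = 0 := by rw [mulVec_mulVec]; exact hy
    have hZy : Z *ᵥ y = 0 := by
      by_contra hne
      have := hS _ hker hne
      rw [mulVec_mulVec, hSZ, zero_mulVec, dotProduct_zero] at this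
      exact this.false
    calc y = Z.submatrix e id *ᵥ y := by rw [hZ, one_mulVec]
      _ = (Z *ᵥ y) ∘ e := rfl
      _ = 0 := by rw [hZy]; rfl
  have hsurj := mulVec_surjective_iff_isUnit.2 (mulVec_injective_iff_isUnit.1 hinj)
  obtain ⟨y, hy⟩ := hsurj (C *ᵥ x)
  exact ⟨y, by rw [mulVec_sub, mulVec_mulVec, ← hy, sub_self]⟩

lemma posSemidef [Finite κ] (hS : PosDefOnKer C S) (hsymm : Sᵀ = S) (hSZ : S * Z = 0)
    (hZ : Z.submatrix e id = 1) : S.PosSemidef := by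
  have := Fintype.ofFinite κ
  refine .of_dotProduct_mulVec_nonneg (isHermitian_iff_isSymm.2 hsymm) fun x => ?_
  obtain ⟨y, hy⟩ := hS.exists_mulVec_sub hSZ hZ x
  have hSZy : S *ᵥ (Z *ᵥ y) = 0 := by rw [mulVec_mulVec, hSZ, zero_mulVec]
  have hquad : star x ⬝ᵥ (S *ᵥ x) = (x - Z *ᵥ y) ⬝ᵥ (S *ᵥ (x - Z *ᵥ y)) := by
    rw [mulVec_sub, hSZy, sub_zero, sub_dotProduct, dotProduct_comm (Z *ᵥ y), ← hsymm,
      mulVec_transpose, ← dotProduct_mulVec, hSZy, dotProduct_zero, sub_zero, star_trivial]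
  rw [hquad]
  obtain h0 | hne := eq_or_ne (x - Z *ᵥ y) 0
  · rw [h0, zero_dotProduct]
  · exact (hS _ hy hne).le

lemma eq_mul_of_mul_eq_zero [Fintype κ] (hS : PosDefOnKer C S) (hSZ : S * Z = 0)
    (hZ : Z.submatrix e id = 1) {M : Matrix m ι ℝ} (hM : S * M = 0) : M = Z * M.submatrix e id := by
  suffices h : ∀ c, ∃ y, M.col c = Z *ᵥ y by
    choose y hy using h
    have hMZ : M = Z * (of y)ᵀ := by ext a c; exact congrFun (hy c) a
    have hy' : M.submatrix e id = (of y)ᵀ := by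
      rw [hMZ, submatrix_mul _ _ e id id Function.bijective_id, hZ, Matrix.one_mul, submatrix_id_id]
    rw [hy', ← hMZ]
  intro c
  obtain ⟨y, hy⟩ := hS.exists_mulVec_sub hSZ hZ (M.col c)
  have hcol : S *ᵥ (M.col c - Z *ᵥ y) = 0 := by
    rw [mulVec_sub, mulVec_mulVec, hSZ, zero_mulVec, sub_zero]
    exact congrArg (·.col c) hM
  refine ⟨y, sub_eq_zero.1 (by_contra fun hne => ?_)⟩
  have := hS _ hy hne
  rw [hcol, dotProduct_zero] at this
  exact this.false

end PosDefOnKer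

section PosSemidef

variable {m : Type*} [Fintype m]

lemma exists_eq_transpose_mul_self {X : Matrix m m ℝ} (hX : X.PosSemidef) :
    ∃ B : Matrix m m ℝ, X = Bᵀ * B := by
  classical
  open scoped MatrixOrder in
  exact CStarAlgebra.nonneg_iff_eq_star_mul_self.1 hX.nonneg

lemma ip_transpose_mul_self (A B : Matrix m m ℝ) :
    ip (Aᵀ * A) (Bᵀ * B) = ((A * Bᵀ)ᴴ * (A * Bᵀ)).trace := by
  rw [ip, conjTranspose_eq_transpose_of_trivial, transpose_mul, transpose_mul, transpose_transpose,
    ← Matrix.mul_assoc, trace_mul_comm]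
  simp only [Matrix.mul_assoc]

lemma ip_nonneg {S X : Matrix m m ℝ} (hS : S.PosSemidef) (hX : X.PosSemidef) : 0 ≤ ip S X := by
  obtain ⟨A, rfl⟩ := exists_eq_transpose_mul_self hS
  obtain ⟨B, rfl⟩ := exists_eq_transpose_mul_self hX
  rw [ip_transpose_mul_self]
  exact (posSemidef_conjTranspose_mul_self _).trace_nonneg

lemma mul_eq_zero_of_ip_eq_zero {S X : Matrix m m ℝ} (hS : S.PosSemidef) (hX : X.PosSemidef)
    (h : ip S X = 0) : S * X = 0 := by
  obtain ⟨A, rfl⟩ := exists_eq_transpose_mul_self hS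
  obtain ⟨B, rfl⟩ := exists_eq_transpose_mul_self hX
  rw [ip_transpose_mul_self, trace_conjTranspose_mul_self_eq_zero_iff] at h
  rw [Matrix.mul_assoc, ← Matrix.mul_assoc A, h, Matrix.zero_mul, Matrix.mul_zero]

end PosSemidef

section Certificate

variable {n r p : ℕ}

lemma Feasible.SDPFeasible {W : Matrix (Fin n × Fin r) (Fin p) ℝ} (hW : Feasible W) :
    SDPFeasible (W * Wᵀ) :=
  ⟨posSemidef_self_mul_conjTranspose W, by
    rw [SBD_eq_smul_one fun i => (hW i).trans (one_smul ℝ _).symm, one_smul]⟩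

lemma SDPFeasible.submatrix_eq_one {X : Matrix (Fin n × Fin r) (Fin n × Fin r) ℝ}
    (hX : SDPFeasible X) (i : Fin n) : X.submatrix (Prod.mk i) (Prod.mk i) = 1 := by
  ext a b
  have h : SBD X (i, a) (i, b) = (1 : Matrix (Fin n × Fin r) (Fin n × Fin r) ℝ) (i, a) (i, b) := by
    rw [hX.2]
  have hsymm : X (i, b) (i, a) = X (i, a) (i, b) := hX.1.isHermitian.apply _ _
  simpa [SBD, hsymm, one_apply] using h

/-- The rank-`r` factor `Ẑ` of `Y = Ẑ * U`, normalised by `U = Y_i`, so that its `i`-th block is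
the identity. -/
def normalizedFactor (Y : Matrix (Fin n × Fin r) (Fin p) ℝ) (i : Fin n) :
    Matrix (Fin n × Fin r) (Fin r) ℝ :=
  Y * (blk Y i)ᵀ

variable {Y : Matrix (Fin n × Fin r) (Fin p) ℝ} {i : Fin n}

lemma normalizedFactor_eq_submatrix :
    normalizedFactor Y i = (Y * Yᵀ).submatrix id (Prod.mk i) :=
  rfl

lemma normalizedFactor_submatrix (hY : Feasible Y) :
    (normalizedFactor Y i).submatrix (Prod.mk i) id = 1 :=
  hY i

lemma normalizedFactor_mul_transpose_self (hYZ : Y = normalizedFactor Y i * blk Y i) :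
    normalizedFactor Y i * (normalizedFactor Y i)ᵀ = Y * Yᵀ := by
  calc normalizedFactor Y i * (normalizedFactor Y i)ᵀ
      = normalizedFactor Y i * blk Y i * Yᵀ := by
        rw [normalizedFactor, transpose_mul, transpose_transpose]; simp only [Matrix.mul_assoc]
    _ = Y * Yᵀ := by rw [← hYZ]

lemma normalizedFactor_feasible (hY : Feasible Y) (hYZ : Y = normalizedFactor Y i * blk Y i) :
    Feasible (normalizedFactor Y i) := fun j => by
  rw [← submatrix_mul_transpose_eq_blk, normalizedFactor_mul_transpose_self hYZ]
  exact hY j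

lemma rank_eq_of_eq_normalizedFactor_mul (hY : Feasible Y)
    (hYZ : Y = normalizedFactor Y i * blk Y i) : Y.rank = r := by
  apply le_antisymm
  · calc Y.rank ≤ (normalizedFactor Y i).rank := by
          nth_rewrite 1 [hYZ]; exact rank_mul_le_left _ _
      _ ≤ r := (rank_le_card_width _).trans_eq (Fintype.card_fin r)
  · calc r = (blk Y i * (blk Y i)ᵀ).rank := by rw [hY i, rank_one, Fintype.card_fin]
      _ ≤ (blk Y i).rank := rank_mul_le_left _ _
      _ ≤ Y.rank := rank_submatrix_le Y (Prod.mk i) id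

lemma eq_normalizedFactor_mul_of_mul_transpose_eq {W : Matrix (Fin n × Fin r) (Fin r) ℝ}
    (hW : Feasible W) (hWY : W * Wᵀ = Y * Yᵀ) : W = normalizedFactor Y i * blk W i := by
  have hWi : (blk W i)ᵀ * blk W i = 1 := mul_eq_one_comm.1 (hW i)
  calc W = normalizedFactor W i * blk W i := by
        rw [normalizedFactor, Matrix.mul_assoc, hWi, Matrix.mul_one]
    _ = normalizedFactor Y i * blk W i := by
        rw [normalizedFactor_eq_submatrix, hWY, ← normalizedFactor_eq_submatrix]

variable {Lhat : Matrix (Fin n × Fin r) (Fin n × Fin r) ℝ} {C : Matrix (Fin r) (Fin n × Fin r) ℝ}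

lemma Smat_mul_normalizedFactor (hSY : Smat Lhat Y * Y = 0) :
    Smat Lhat Y * normalizedFactor Y i = 0 := by
  rw [normalizedFactor, ← Matrix.mul_assoc, hSY, Matrix.zero_mul]

lemma eq_normalizedFactor_mul (hY : Feasible Y) (hSY : Smat Lhat Y * Y = 0)
    (hS : PosDefOnKer C (Smat Lhat Y)) : Y = normalizedFactor Y i * blk Y i :=
  hS.eq_mul_of_mul_eq_zero (Smat_mul_normalizedFactor hSY) (normalizedFactor_submatrix hY) hSY

lemma Smat_posSemidef (i : Fin n) (hL : Lhatᵀ = Lhat) (hY : Feasible Y)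
    (hSY : Smat Lhat Y * Y = 0) (hS : PosDefOnKer C (Smat Lhat Y)) : (Smat Lhat Y).PosSemidef :=
  hS.posSemidef (Smat_transpose hL Y) (Smat_mul_normalizedFactor hSY)
    (normalizedFactor_submatrix hY (i := i))

lemma ip_mul_transpose_le_of_Smat_posSemidef (hS : (Smat Lhat Y).PosSemidef)
    {X : Matrix (Fin n × Fin r) (Fin n × Fin r) ℝ} (hX : SDPFeasible X) :
    ip Lhat (Y * Yᵀ) ≤ ip Lhat X := by
  rw [ip_eq_add_ip_Smat Lhat Y (hX.2.trans (one_smul ℝ 1).symm), one_mul]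
  exact le_add_of_nonneg_right (ip_nonneg hS hX.1)

lemma eq_mul_transpose_of_ip_le (i : Fin n) (hL : Lhatᵀ = Lhat) (hY : Feasible Y)
    (hSY : Smat Lhat Y * Y = 0) (hS : PosDefOnKer C (Smat Lhat Y))
    {X : Matrix (Fin n × Fin r) (Fin n × Fin r) ℝ} (hX : SDPFeasible X)
    (hle : ip Lhat X ≤ ip Lhat (Y * Yᵀ)) : X = Y * Yᵀ := by
  have hpsd := Smat_posSemidef i hL hY hSY hS
  have hsplit := ip_eq_add_ip_Smat Lhat Y (hX.2.trans (one_smul ℝ 1).symm)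
  have hSX : Smat Lhat Y * X = 0 := mul_eq_zero_of_ip_eq_zero hpsd hX.1 <|
    le_antisymm (by linarith) (ip_nonneg hpsd hX.1)
  have hXZ : X = normalizedFactor Y i * X.submatrix (Prod.mk i) id :=
    hS.eq_mul_of_mul_eq_zero (Smat_mul_normalizedFactor hSY) (normalizedFactor_submatrix hY) hSX
  have hcol : X.submatrix id (Prod.mk i) = normalizedFactor Y i := by
    calc X.submatrix id (Prod.mk i)
        = normalizedFactor Y i * X.submatrix (Prod.mk i) (Prod.mk i) :=
          congrArg (·.submatrix id (Prod.mk i)) hXZ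
      _ = normalizedFactor Y i := by rw [hX.submatrix_eq_one, Matrix.mul_one]
  have hrow : X.submatrix (Prod.mk i) id = (normalizedFactor Y i)ᵀ := by
    rw [← hcol, transpose_submatrix, (isHermitian_iff_isSymm.1 hX.1.isHermitian).eq]
  rw [hXZ, hrow, normalizedFactor_mul_transpose_self (eq_normalizedFactor_mul hY hSY hS)]

end Certificate

section Main

variable {n r p : ℕ}

lemma LZmat_transpose {L : Matrix (Fin n) (Fin n) ℝ} (hL : L.IsSymm)
    (Zb : Fin n → Matrix (Fin r) (Fin r) ℝ) : (LZmat L Zb)ᵀ = LZmat L Zb := by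
  rw [LZmat, transpose_mul, transpose_mul, transpose_transpose, ← kroneckerMap_transpose, hL.eq,
    transpose_one, Matrix.mul_assoc]

lemma IsSecondOrderCritical.posDefOnKer [NeZero n] [NeZero r] (hp : r + 2 < p)
    {L : Matrix (Fin n) (Fin n) ℝ} (hL : IsLaplacian L)
    {Zb : Fin n → Matrix (Fin r) (Fin r) ℝ} (hZb : ∀ i, Zb i * (Zb i)ᵀ = 1)
    {Δ : Matrix (Fin n × Fin r) (Fin n × Fin r) ℝ}
    (hΔ : opNorm Δ < lam2 L / (√5 * (2 * ((p : ℝ) + r - 2) / ((p : ℝ) - r - 2)) * √(r * n)))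
    {Y : Matrix (Fin n × Fin r) (Fin p) ℝ} (hY : IsSecondOrderCritical (LZmat L Zb - Δ) Y) :
    PosDefOnKer (Zstack Zb)ᵀ (Smat (LZmat L Zb - Δ) Y) := by
  set D := Dmat Zb with hD
  set S := Smat (LZmat L Zb - Δ) Y with hS
  have hDD : D * Dᵀ = 1 := Dmat_mul_transpose_self hZb
  have hDD' : Dᵀ * D = 1 := Dmat_transpose_mul_self hZb
  have hZbT : ∀ i, (Zb i)ᵀ * (Zb i)ᵀᵀ = 1 := fun i => mul_eq_one_comm.1 (hZb i)
  have hcost : Dᵀ * (LZmat L Zb - Δ) * Dᵀᵀ =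
      L ⊗ₖ (1 : Matrix (Fin r) (Fin r) ℝ) - Dᵀ * Δ * Dᵀᵀ := by
    rw [Matrix.mul_sub, Matrix.sub_mul, LZmat, ← hD, transpose_transpose, Matrix.mul_assoc D,
      ← Matrix.mul_assoc Dᵀ, hDD', Matrix.one_mul, Matrix.mul_assoc, hDD', Matrix.mul_one]
  have hY' := hY.conj hZbT
  have hS' := Smat_conj hZbT (LZmat L Zb - Δ) Y
  have hnorm := opNorm_conj hZbT Δ
  rw [← Dmat_transpose, ← hD] at hY' hS' hnorm
  rw [hcost, ← hS] at hS'
  rw [hcost] at hY'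
  rw [← hnorm] at hΔ
  have hpos := sub_pos.2 (hY'.noise_add_energy_lt_lam2 hp hL hΔ)
  intro x hx hx₀
  have hDx : ∀ a, ∑ i, (Dᵀ *ᵥ x) (i, a) = 0 := fun a => by
    rw [sum_Dmat_transpose_mulVec, hx, Pi.zero_apply]
  have hnormsq : (Dᵀ *ᵥ x) ⬝ᵥ (Dᵀ *ᵥ x) = x ⬝ᵥ x := by
    have := mulVec_dotProduct_mulVec_mulVec Dᵀ 1 x
    rwa [one_mulVec, transpose_transpose, Matrix.mul_one, hDD, one_mulVec] at this
  have hquad : (Dᵀ *ᵥ x) ⬝ᵥ ((Dᵀ * S * Dᵀᵀ) *ᵥ (Dᵀ *ᵥ x)) = x ⬝ᵥ (S *ᵥ x) := by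
    rw [mulVec_dotProduct_mulVec_mulVec, transpose_transpose, Matrix.mul_assoc, Matrix.mul_assoc,
      Matrix.mul_assoc, hDD, Matrix.mul_one, ← Matrix.mul_assoc, hDD, Matrix.one_mul]
  have hxx : 0 < x ⬝ᵥ x := dotProduct_self_star_pos_iff.2 hx₀
  rw [← hquad, ← hS']
  refine (mul_pos hpos hxx).trans_le ?_
  rw [← hnormsq]
  exact hL.quadForm_Smat_ge hY'.1 _ hDx

end Main

theorem noisy_benign_landscape_general
    (n r p : ℕ) (hn : 1 ≤ n) (hr : 1 ≤ r) (hp : r + 2 < p)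
    (L : Matrix (Fin n) (Fin n) ℝ) (hL : IsLaplacian L)
    (Zb : Fin n → Matrix (Fin r) (Fin r) ℝ) (hZb : ∀ i, Zb i * (Zb i)ᵀ = 1)
    (Δ : Matrix (Fin n × Fin r) (Fin n × Fin r) ℝ) (hΔsym : Δᵀ = Δ)
    (Lhat : Matrix (Fin n × Fin r) (Fin n × Fin r) ℝ) (hLhat : Lhat = LZmat L Zb - Δ)
    (Cp : ℝ) (hCp : Cp = 2 * ((p : ℝ) + r - 2) / ((p : ℝ) - r - 2))
    (hΔsmall : opNorm Δ < lam2 L / (√5 * Cp * √(r * n)))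
    (Y : Matrix (Fin n × Fin r) (Fin p) ℝ) (hY : IsSecondOrderCritical Lhat Y) :
    Y.rank = r ∧
    (∃ (Zhat : Matrix (Fin n × Fin r) (Fin r) ℝ) (U : Matrix (Fin r) (Fin p) ℝ),
      Feasible Zhat ∧ U * Uᵀ = 1 ∧ Y = Zhat * U ∧
      (∀ W : Matrix (Fin n × Fin r) (Fin r) ℝ, Feasible W →
        ip Lhat (Zhat * Zhatᵀ) ≤ ip Lhat (W * Wᵀ)) ∧
      (∀ W : Matrix (Fin n × Fin r) (Fin r) ℝ, Feasible W →
        (∀ W' : Matrix (Fin n × Fin r) (Fin r) ℝ, Feasible W' →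
          ip Lhat (W * Wᵀ) ≤ ip Lhat (W' * W'ᵀ)) →
        ∃ Q : Matrix (Fin r) (Fin r) ℝ, Q * Qᵀ = 1 ∧ W = Zhat * Q)) ∧
    (∀ X : Matrix (Fin n × Fin r) (Fin n × Fin r) ℝ, SDPFeasible X →
      ip Lhat (Y * Yᵀ) ≤ ip Lhat X) ∧
    (∀ X : Matrix (Fin n × Fin r) (Fin n × Fin r) ℝ, SDPFeasible X →
      (∀ X' : Matrix (Fin n × Fin r) (Fin n × Fin r) ℝ, SDPFeasible X' →
        ip Lhat X ≤ ip Lhat X') →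
      X = Y * Yᵀ) ∧
    (∀ Y' : Matrix (Fin n × Fin r) (Fin p) ℝ, IsSecondOrderCritical Lhat Y' →
      Y' * Y'ᵀ = Y * Yᵀ) := by
  subst hLhat hCp
  have : NeZero n := ⟨by omega⟩
  have : NeZero r := ⟨by omega⟩
  have hsymm : (LZmat L Zb - Δ)ᵀ = LZmat L Zb - Δ := by
    rw [transpose_sub, LZmat_transpose hL.isSymm Zb, hΔsym]
  have hopt : ∀ {Y'}, IsSecondOrderCritical (LZmat L Zb - Δ) Y' → ∀ {X}, SDPFeasible X →
      ip (LZmat L Zb - Δ) (Y' * Y'ᵀ) ≤ ip (LZmat L Zb - Δ) X := fun {Y'} hY' _ hX =>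
    ip_mul_transpose_le_of_Smat_posSemidef
      (Smat_posSemidef 0 hsymm hY'.1 hY'.2.1 (hY'.posDefOnKer hp hL hZb hΔsmall)) hX
  have hS := hY.posDefOnKer hp hL hZb hΔsmall
  have hunique : ∀ {X}, SDPFeasible X → ip (LZmat L Zb - Δ) X ≤ ip (LZmat L Zb - Δ) (Y * Yᵀ) →
      X = Y * Yᵀ := eq_mul_transpose_of_ip_le 0 hsymm hY.1 hY.2.1 hS
  have hYZ : Y = normalizedFactor Y 0 * blk Y 0 := eq_normalizedFactor_mul hY.1 hY.2.1 hS
  have hZZ := normalizedFactor_mul_transpose_self hYZ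
  have hZ := normalizedFactor_feasible hY.1 hYZ
  refine ⟨rank_eq_of_eq_normalizedFactor_mul hY.1 hYZ,
    ⟨normalizedFactor Y 0, blk Y 0, hZ, hY.1 0, hYZ, fun W hW => hZZ ▸ hopt hY hW.SDPFeasible,
      fun W hW hWmin => ⟨blk W 0, hW 0, ?_⟩⟩,
    fun X hX => hopt hY hX, fun X hX hXmin => hunique hX (hXmin _ hY.1.SDPFeasible),
    fun Y' hY' => hunique hY'.1.SDPFeasible (hopt hY' hY.1.SDPFeasible)⟩
  exact eq_normalizedFactor_mul_of_mul_transpose_eq hW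
    (hunique hW.SDPFeasible (hZZ ▸ hWmin _ hZ))

/-- **Theorem 1.3 (benign landscape under small noise).**  Suppose `G` is connected,
`p > r + 2`, `C_p = 2(p + r − 2)/(p − r − 2)`, and `‖Δ‖ < λ₂/(√5 C_p √(rn))`.  Then every
second-order critical point `Y` of the rank-`p` problem has rank exactly `r`, factors as
`Y = Ẑ U` with `Ẑ` having orthogonal `r × r` blocks and `U Uᵀ = I_r`; `Y Yᵀ` is the unique
optimal solution of the SDP relaxation (in particular all second-order critical points agree up
to `Y Yᵀ`); and `Ẑ` is the minimizer of the unrelaxed problem, uniquely up to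
right-multiplication by an element of `O(r)`. -/
theorem noisy_benign_landscape
    (n r p : ℕ) (hn : 1 ≤ n) (hr : 1 ≤ r) (hrp : r ≤ p) (hp : r + 2 < p)
    (G : SimpleGraph (Fin n)) [DecidableRel G.Adj] (hG : G.Connected)
    (Zb : Fin n → Matrix (Fin r) (Fin r) ℝ) (hZb : ∀ i, Zb i * (Zb i)ᵀ = 1)
    (Δ : Matrix (Fin n × Fin r) (Fin n × Fin r) ℝ) (hΔsym : Δᵀ = Δ)
    (hΔsupp : ∀ q q' : Fin n × Fin r, ¬ G.Adj q.1 q'.1 → Δ q q' = 0)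
    (Lhat : Matrix (Fin n × Fin r) (Fin n × Fin r) ℝ)
    (hLhat : Lhat = LZmat (G.lapMatrix ℝ) Zb - Δ)
    (Cp : ℝ) (hCp : Cp = 2 * ((p : ℝ) + r - 2) / ((p : ℝ) - r - 2))
    (hΔsmall : opNorm Δ < lam2 (G.lapMatrix ℝ) / (Real.sqrt 5 * Cp * Real.sqrt (r * n)))
    (Y : Matrix (Fin n × Fin r) (Fin p) ℝ)
    (hY : IsSecondOrderCritical Lhat Y) :
    -- (i) rank-`r` factorization
    Y.rank = r ∧
    (∃ (Zhat : Matrix (Fin n × Fin r) (Fin r) ℝ) (U : Matrix (Fin r) (Fin p) ℝ),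
      Feasible Zhat ∧ U * Uᵀ = 1 ∧ Y = Zhat * U ∧
      -- (iii) `Ẑ` minimizes the unrelaxed problem, uniquely up to right `O(r)`-multiplication
      (∀ W : Matrix (Fin n × Fin r) (Fin r) ℝ, Feasible W →
        ip Lhat (Zhat * Zhatᵀ) ≤ ip Lhat (W * Wᵀ)) ∧
      (∀ W : Matrix (Fin n × Fin r) (Fin r) ℝ, Feasible W →
        (∀ W' : Matrix (Fin n × Fin r) (Fin r) ℝ, Feasible W' →
          ip Lhat (W * Wᵀ) ≤ ip Lhat (W' * W'ᵀ)) →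
        ∃ Q : Matrix (Fin r) (Fin r) ℝ, Q * Qᵀ = 1 ∧ W = Zhat * Q)) ∧
    -- (ii) `Y Yᵀ` is the unique optimal solution of the SDP relaxation
    (∀ X : Matrix (Fin n × Fin r) (Fin n × Fin r) ℝ, SDPFeasible X →
      ip Lhat (Y * Yᵀ) ≤ ip Lhat X) ∧
    (∀ X : Matrix (Fin n × Fin r) (Fin n × Fin r) ℝ, SDPFeasible X →
      (∀ X' : Matrix (Fin n × Fin r) (Fin n × Fin r) ℝ, SDPFeasible X' →
        ip Lhat X ≤ ip Lhat X') →
      X = Y * Yᵀ) ∧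
    -- in particular any two second-order critical points have the same `Y Yᵀ`
    (∀ Y' : Matrix (Fin n × Fin r) (Fin p) ℝ, IsSecondOrderCritical Lhat Y' →
      Y' * Y'ᵀ = Y * Yᵀ) := by
  exact noisy_benign_landscape_general n r p hn hr hp _ (isLaplacian_lapMatrix G) Zb hZb Δ hΔsym
    Lhat hLhat Cp hCp hΔsmall Y hY

end SyncPaper
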